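/- Let H be a complex separable Hilbert space and let ℒ = {0, M, N, H} be a subspace lattice with two atoms on H. Then for every Banach Alg ℒ-bimodule 𝑀 and every n ∈ ℕ, every bounded local n-cocycle T : (Alg ℒ)ⁿ → 𝑀 is an n-cocycle. -/

import Mathlib

/-!
Call an algebra idempotent generated if its elements are limits of polynomials in idempotents of
the algebra. If `φ` is a bounded bilinear map on such an algebra that vanishes on pairs with zero
product, then `φ (x e, y) = φ (x, e y)` for idempotents `e`, hence `φ (x, y) = φ (1, x y)`. Used
in one variable after the other, this shows that a bounded multilinear map vanishes if it vanishes
whenever all products of consecutive arguments are zero and whenever an argument is `1`. For a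
local cocycle `T`, the map `(a₀, …, aₙ, b) ↦ δT(a₀, …, aₙ) · b` is of this kind, once algebra and
bimodule are unitized and `T` is extended by zero to tuples containing the unit.

It remains to see that `Alg {0, M, N, H}` is idempotent generated. The spectral theorem for the
compression of the projection onto `Mᗮ` to `N` splits the pair `(M, N)`, up to similarity, into a
part at positive angle, which contributes two full operator algebras, and a part
`(K × 0, graph D)` with `D` injective. As similarities may distort lengths by a factor `2`, one
can take `D` diagonal with eigenvalues powers of `1/2`. Exchanging basis vectors in pairs with the
same eigenvalue reduces to simple eigenvalues. Operators intertwined by such a `D` have matrix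
entries that decay geometrically on one side of the diagonal, so by Schur's test their strictly
triangular parts factor through the shift. The shift in turn is off-diagonal for the parity
grading, and off-diagonal corners are combinations of idempotents.
-/

open scoped Topology

/-- A Banach bimodule over a (possibly non-unital) complex Banach algebra `A`:
a Banach space `M` with bounded left and right module actions
(`l a m = a · m`, `r a m = m · a`) satisfying `(a·m)·b = a·(m·b)`. -/
structure BanachBimodule (A : Type*) (M : Type*) [NonUnitalSeminormedRing A]
    [Module ℂ A] [SeminormedAddCommGroup M] [Module ℂ M] where
  l : A →ₗ[ℂ] M →ₗ[ℂ] M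
  r : A →ₗ[ℂ] M →ₗ[ℂ] M
  l_mul : ∀ a b m, l (a * b) m = l a (l b m)
  r_mul : ∀ a b m, r (a * b) m = r b (r a m)
  l_r : ∀ a b m, l a (r b m) = r b (l a m)
  l_bdd : ∃ C : ℝ, ∀ a m, ‖l a m‖ ≤ C * ‖a‖ * ‖m‖
  r_bdd : ∃ C : ℝ, ∀ a m, ‖r a m‖ ≤ C * ‖a‖ * ‖m‖

variable {A M : Type*} [NonUnitalSeminormedRing A] [Module ℂ A]
  [SeminormedAddCommGroup M] [Module ℂ M]

/-- The Hochschild coboundary `δⁿT` of an `n`-linear map `T : Aⁿ → M`: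
`δⁿT(a₁,…,a_{n+1}) = a₁·T(a₂,…,a_{n+1})
  + Σ_{j=1}^{n} (−1)ʲ T(a₁,…,a_{j−1}, a_j a_{j+1}, a_{j+2},…,a_{n+1})
  + (−1)^{n+1} T(a₁,…,a_n)·a_{n+1}`. -/
def cocycleBoundary (B : BanachBimodule A M) {n : ℕ}
    (T : MultilinearMap ℂ (fun _ : Fin n => A) M) : (Fin (n + 1) → A) → M := fun a =>
  B.l (a 0) (T fun i => a i.succ)
    + ∑ j : Fin n, ((-1 : ℤ) ^ ((j : ℕ) + 1)) •
        T (fun i => if (i : ℕ) < (j : ℕ) then a i.castSucc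
          else if (i : ℕ) = (j : ℕ) then a i.castSucc * a i.succ else a i.succ)
    + ((-1 : ℤ) ^ (n + 1)) • B.r (a (Fin.last n)) (T fun i => a i.castSucc)

/-- `T` is a bounded `n`-cocycle: a bounded (continuous) `n`-linear map with
`δⁿT = 0`. -/
def IsBoundedCocycle (B : BanachBimodule A M) {n : ℕ}
    (T : MultilinearMap ℂ (fun _ : Fin n => A) M) : Prop :=
  Continuous T ∧ ∀ a : Fin (n + 1) → A, cocycleBoundary B T a = 0

/-- `T` is a bounded local `n`-cocycle: `T` is bounded and for each tuple `a` there
is a bounded `n`-cocycle `T'` with `T a = T' a`. -/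
def IsBoundedLocalCocycle (B : BanachBimodule A M) {n : ℕ}
    (T : MultilinearMap ℂ (fun _ : Fin n => A) M) : Prop :=
  Continuous T ∧ ∀ a : Fin n → A, ∃ T' : MultilinearMap ℂ (fun _ : Fin n => A) M,
    IsBoundedCocycle B T' ∧ T a = T' a

section IdempotentClosure

variable {𝕜 Q P : Type*} [CommRing 𝕜] [Ring Q] [Algebra 𝕜 Q] [TopologicalSpace Q]
  [IsTopologicalSemiring Q] [ContinuousConstSMul 𝕜 Q] [Ring P] [Algebra 𝕜 P] [TopologicalSpace P]
  [IsTopologicalSemiring P] [ContinuousConstSMul 𝕜 P]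

/-- The closed non-unital subalgebra of `Q` generated by the idempotents that lie in `S`. The
closure is taken in the ambient ring, so that it makes sense for non-closed `S`. -/
def idempotentClosure (S : Subalgebra 𝕜 Q) : NonUnitalSubalgebra 𝕜 Q :=
  (NonUnitalAlgebra.adjoin 𝕜 {e | e ∈ S ∧ IsIdempotentElem e}).topologicalClosure

/-- Every element of `S` is a limit of polynomials in idempotents of `S`. -/
def IsIdempotentGenerated (S : Subalgebra 𝕜 Q) : Prop :=
  ∀ x ∈ S, x ∈ idempotentClosure S

variable {S : Subalgebra 𝕜 Q} {S' : Subalgebra 𝕜 P}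

theorem mem_idempotentClosure_of_isIdempotentElem {e : Q} (he : IsIdempotentElem e) (heS : e ∈ S) :
    e ∈ idempotentClosure S :=
  NonUnitalSubalgebra.le_topologicalClosure _ (NonUnitalAlgebra.subset_adjoin 𝕜 ⟨heS, he⟩)

theorem isClosed_idempotentClosure : IsClosed (idempotentClosure S : Set Q) :=
  NonUnitalSubalgebra.isClosed_topologicalClosure _

theorem idempotentClosure_le {J : NonUnitalSubalgebra 𝕜 Q} (hJ : IsClosed (J : Set Q))
    (h : ∀ e ∈ S, IsIdempotentElem e → e ∈ J) : idempotentClosure S ≤ J :=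
  NonUnitalSubalgebra.topologicalClosure_minimal
    (NonUnitalAlgebra.adjoin_le fun e he => h e he.1 he.2) hJ

theorem map_mem_idempotentClosure {F : Type*} [FunLike F Q P] [NonUnitalAlgHomClass F 𝕜 Q P]
    (f : F) (hf : Continuous f)
    (hS : ∀ x ∈ S, f x ∈ S') {x : Q} (hx : x ∈ idempotentClosure S) :
    f x ∈ idempotentClosure S' := by
  suffices idempotentClosure S ≤ (idempotentClosure S').comap f from this hx
  exact idempotentClosure_le (isClosed_idempotentClosure.preimage hf) fun e he hee =>
    mem_idempotentClosure_of_isIdempotentElem (hee.map f) (hS e he)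

theorem star_mem_idempotentClosure [StarRing 𝕜] [StarRing Q] [StarModule 𝕜 Q] [ContinuousStar Q]
    {S' : Subalgebra 𝕜 Q} (hS : ∀ x ∈ S, star x ∈ S') {x : Q} (hx : x ∈ idempotentClosure S) :
    star x ∈ idempotentClosure S' := by
  suffices idempotentClosure S ≤ star (idempotentClosure S') from this hx
  exact idempotentClosure_le (isClosed_idempotentClosure.preimage continuous_star) fun e he hee =>
    mem_idempotentClosure_of_isIdempotentElem
      (by rw [IsIdempotentElem, ← star_mul, hee]) (hS e he)

theorem IsIdempotentGenerated.top_coe (hS : IsIdempotentGenerated S) :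
    IsIdempotentGenerated (⊤ : Subalgebra 𝕜 S) := by
  rintro ⟨x, hx⟩ -
  have image_idempotents : S.val.toNonUnitalAlgHom ''
      {e : S | e ∈ (⊤ : Subalgebra 𝕜 S) ∧ IsIdempotentElem e} =
      {e | e ∈ S ∧ IsIdempotentElem e} := by
    ext e
    constructor
    · rintro ⟨e, ⟨-, hee⟩, rfl⟩
      exact ⟨e.2, hee.map S.val⟩
    · exact fun ⟨he, hee⟩ => ⟨⟨e, he⟩, ⟨trivial, Subtype.ext hee⟩, rfl⟩
  have hcl : x ∈ closure (Subtype.val '' (NonUnitalAlgebra.adjoin 𝕜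
      {e : S | e ∈ (⊤ : Subalgebra 𝕜 S) ∧ IsIdempotentElem e} : Set S)) := by
    have h := hS x hx
    rw [idempotentClosure, ← image_idempotents, ← NonUnitalAlgHom.map_adjoin] at h
    exact h
  exact closure_subtype.2 hcl

section Peirce

variable {e x a b : Q}

theorem mul_mul_one_sub_mem_idempotentClosure (hee : IsIdempotentElem e)
    (he : e ∈ S) (hx : x ∈ S) : e * x * (1 - e) ∈ idempotentClosure S := by
  have hsum : IsIdempotentElem (e + e * x * (1 - e)) := by
    have h : (1 - e) * e = 0 := by rw [sub_mul, hee, one_mul, sub_self]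
    calc (e + e * x * (1 - e)) * (e + e * x * (1 - e))
        = e * e + e * e * x * (1 - e) + e * x * ((1 - e) * e)
          + e * x * ((1 - e) * e) * x * (1 - e) := by noncomm_ring
      _ = e + e * x * (1 - e) := by rw [h, hee]; simp
  have hmem : e + e * x * (1 - e) ∈ S :=
    S.add_mem he (S.mul_mem (S.mul_mem he hx) (S.sub_mem S.one_mem he))
  simpa using sub_mem (mem_idempotentClosure_of_isIdempotentElem hsum hmem)
    (mem_idempotentClosure_of_isIdempotentElem hee he)

theorem mul_mem_idempotentClosure_of_peirce (hee : IsIdempotentElem e) (he : e ∈ S) (hx : x ∈ S)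
    (ha : a ∈ S) (hb : b ∈ S) : a * (e * x * (1 - e)) * b ∈ idempotentClosure S := by
  obtain ⟨f, hf⟩ : ∃ f, f = 1 - e := ⟨_, rfl⟩
  have hff : IsIdempotentElem f := hf ▸ hee.one_sub
  have hfS : f ∈ S := hf ▸ S.sub_mem S.one_mem he
  have hef : ∀ {x}, x ∈ S → e * x * f ∈ idempotentClosure S := fun hx =>
    hf ▸ mul_mul_one_sub_mem_idempotentClosure hee he hx
  have hfe : ∀ {x}, x ∈ S → f * x * e ∈ idempotentClosure S := fun hx => by
    have h := mul_mul_one_sub_mem_idempotentClosure hff hfS hx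
    rwa [hf, sub_sub_cancel, ← hf] at h
  rw [← hf]
  have hy : e * x * f ∈ S := S.mul_mem (S.mul_mem he hx) hfS
  have hey : e * (e * x * f) = e * x * f := by rw [← mul_assoc, ← mul_assoc, hee]
  have hyf : e * x * f * f = e * x * f := by rw [mul_assoc, hff]
  generalize e * x * f = y at hy hey hyf ⊢
  have hay := S.mul_mem ha hy
  have hyb := S.mul_mem hy hb
  -- the two off-diagonal corners of `a * y * b`, and products of off-diagonal corners for the rest
  have corners := add_mem
    (add_mem (hef (S.mul_mem hay hb)) (hfe (S.mul_mem hay hb)))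
    (add_mem (mul_mem (hef hay) (hfe hb)) (mul_mem (hfe ha) (hef hyb)))
  convert corners using 1
  calc a * y * b = (e + f) * (a * y * b) * (e + f) := by rw [hf]; noncomm_ring
    _ = e * (a * y * b) * f + f * (a * y * b) * e
        + (e * a * y * b * e + f * a * y * b * f) := by noncomm_ring
    _ = e * (a * y * b) * f + f * (a * y * b) * e
        + (e * a * (y * f * f) * b * e + f * a * (e * (e * y)) * b * f) := by
      rw [hyf, hyf, hey, hey]
    _ = _ := by noncomm_ring

theorem mul_mem_idempotentClosure_of_corners_eq_zero (hee : IsIdempotentElem e) (he : e ∈ S)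
    (hx : x ∈ S) (ha : a ∈ S) (hb : b ∈ S) (h₁ : e * x * e = 0)
    (h₂ : (1 - e) * x * (1 - e) = 0) : a * x * b ∈ idempotentClosure S := by
  convert add_mem (mul_mem_idempotentClosure_of_peirce hee he hx ha hb)
    (mul_mem_idempotentClosure_of_peirce hee.one_sub (S.sub_mem S.one_mem he) hx ha hb) using 1
  calc a * x * b = a * (e * x * e + e * x * (1 - e) + (1 - e) * x * (1 - (1 - e))
        + (1 - e) * x * (1 - e)) * b := by noncomm_ring
    _ = _ := by rw [h₁, h₂]; noncomm_ring

end Peirce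

theorem mem_idempotentClosure_of_corners {ι : Type*} {s : Finset ι} {f : ι → Q} {x : Q}
    (hf : ∀ i ∈ s, IsIdempotentElem (f i)) (hfS : ∀ i ∈ s, f i ∈ S) (hsum : ∑ i ∈ s, f i = 1)
    (hx : x ∈ S) (hcorner : ∀ i ∈ s, f i * x * f i ∈ idempotentClosure S) :
    x ∈ idempotentClosure S := by
  have hrow : ∑ i ∈ s, (f i * x * f i + f i * x * (1 - f i)) = x := by
    simp only [← mul_add, add_sub_cancel, mul_one, ← Finset.sum_mul, hsum, one_mul]
  rw [← hrow]
  exact sum_mem fun i hi => add_mem (hcorner i hi)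
    (mul_mul_one_sub_mem_idempotentClosure (hf i hi) (hfS i hi) hx)

section PartialIsometry

variable {w w' : Q}

theorem mul_mem_idempotentClosure_of_sq_eq_zero {a b : Q} (hw : w ∈ S) (hw' : w' ∈ S) (ha : a ∈ S)
    (hb : b ∈ S) (hww : w * w = 0) (hpi : w * w' * w = w) : a * w * b ∈ idempotentClosure S := by
  refine mul_mem_idempotentClosure_of_corners_eq_zero (e := w' * w) ?_ (S.mul_mem hw' hw) hw ha hb
    ?_ ?_
  · calc w' * w * (w' * w) = w' * (w * w' * w) := by noncomm_ring
      _ = w' * w := by rw [hpi]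
  · calc w' * w * w * (w' * w) = w' * (w * w) * w' * w := by noncomm_ring
      _ = 0 := by rw [hww]; simp
  · calc (1 - w' * w) * w * (1 - w' * w) = (1 - w' * w) * (w - w * w' * w) := by noncomm_ring
      _ = 0 := by rw [hpi]; simp

theorem mem_idempotentClosure_of_halving {x : Q} (hw : w ∈ S) (hw' : w' ∈ S) (hx : x ∈ S)
    (hww : w * w = 0) (hpi : w * w' * w = w)
    (hcorner : (1 - (w * w' + w' * w)) * x * (1 - (w * w' + w' * w)) ∈ idempotentClosure S) :
    x ∈ idempotentClosure S := by
  have heS : w * w' + w' * w ∈ S := S.add_mem (S.mul_mem hw hw') (S.mul_mem hw' hw)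
  have key : ∀ a ∈ S, ∀ b ∈ S, a * (w * w' + w' * w) * b ∈ idempotentClosure S := by
    intro a ha b hb
    convert add_mem (mul_mem_idempotentClosure_of_sq_eq_zero hw hw' ha (S.mul_mem hw' hb) hww hpi)
      (mul_mem_idempotentClosure_of_sq_eq_zero hw hw' (S.mul_mem ha hw') hb hww hpi) using 1
    noncomm_ring
  generalize w * w' + w' * w = e at heS key hcorner
  convert add_mem (add_mem (key 1 S.one_mem x hx)
    (key ((1 - e) * x) (S.mul_mem (S.sub_mem S.one_mem heS) hx) 1 S.one_mem)) hcorner using 1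
  noncomm_ring

end PartialIsometry

end IdempotentClosure

section ZeroProducts

variable {𝕜 R X : Type*} [NontriviallyNormedField 𝕜] [NormedRing R] [NormedAlgebra 𝕜 R]
  [NormedAddCommGroup X] [NormedSpace 𝕜 X]

theorem apply_one_eq_of_zero_products (hR : IsIdempotentGenerated (⊤ : Subalgebra 𝕜 R))
    {φ : R → R → X} (hl : ∀ y, IsBoundedLinearMap 𝕜 fun b => φ b y)
    (hr : ∀ b, IsBoundedLinearMap 𝕜 (φ b)) (h₀ : ∀ b y, b * y = 0 → φ b y = 0) (x : R) :
    φ x 1 = φ 1 x := by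
  let J : NonUnitalSubalgebra 𝕜 R :=
    { carrier := {x | ∀ b y, φ (b * x) y = φ b (x * y)}
      zero_mem' := fun b y => by simpa using (hl y).map_zero.trans (hr b).map_zero.symm
      add_mem' := fun {u v} hu hv b y => by
        rw [mul_add, add_mul, (hl y).map_add, (hr b).map_add, hu, hv]
      mul_mem' := fun {u v} hu hv b y => by rw [← mul_assoc, hv, hu, mul_assoc]
      smul_mem' := fun c u hu b y => by
        rw [mul_smul_comm, smul_mul_assoc, (hl y).map_smul, (hr b).map_smul, hu] }
  have hJ : IsClosed (J : Set R) := by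
    have : (J : Set R) = ⋂ (b) (y), {x | φ (b * x) y = φ b (x * y)} := by
      ext
      simp only [Set.mem_iInter]
      rfl
    rw [this]
    exact isClosed_iInter fun b => isClosed_iInter fun y => isClosed_eq
      ((hl y).continuous.comp (continuous_const_mul b))
      ((hr b).continuous.comp (continuous_mul_const y))
  have hidem : ∀ e : R, IsIdempotentElem e → e ∈ J := fun e he b y => by
    have h₁ : φ (b * e) (y - e * y) = 0 :=
      h₀ _ _ (by rw [mul_sub, ← mul_assoc, mul_assoc b e e, he, sub_self])
    have h₂ : φ (b - b * e) (e * y) = 0 :=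
      h₀ _ _ (by rw [sub_mul, ← mul_assoc, ← mul_assoc, mul_assoc b e e, he, sub_self])
    rw [(hr _).map_sub, sub_eq_zero] at h₁
    rw [(hl _).map_sub, sub_eq_zero] at h₂
    exact h₁.trans h₂.symm
  simpa using idempotentClosure_le hJ (fun e _ he => hidem e he) (hR x trivial) 1 1

theorem consecutive_mul_update_eq_zero {m : ℕ} {a : Fin (m + 1) → R} {i₀ : Fin m}
    (h : ∀ i : Fin m, i₀ < i → a i.castSucc * a i.succ = 0) {b y : R} (hby : b * y = 0)
    {i : Fin m} (hi : i₀ ≤ i) :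
    Function.update (Function.update a i₀.castSucc b) i₀.succ (y * a i₀.succ) i.castSucc *
      Function.update (Function.update a i₀.castSucc b) i₀.succ (y * a i₀.succ) i.succ = 0 := by
  rcases hi.eq_or_lt with rfl | hi
  · rw [Function.update_of_ne Fin.castSucc_lt_succ.ne, Function.update_self,
      Function.update_self, ← mul_assoc, hby, zero_mul]
  · have hsucc : Function.update (Function.update a i₀.castSucc b) i₀.succ (y * a i₀.succ) i.succ
        = a i.succ := by
      rw [Function.update_of_ne (Fin.succ_lt_succ_iff.2 hi).ne',
        Function.update_of_ne (Fin.castSucc_lt_succ_iff.2 hi.le).ne']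
    rw [hsucc]
    by_cases hc : i.castSucc = i₀.succ
    · rw [hc, Function.update_self, mul_assoc, ← hc, h i hi, mul_zero]
    · rw [Function.update_of_ne hc, Function.update_of_ne (Fin.castSucc_lt_castSucc_iff.2 hi).ne',
        h i hi]

theorem multilinear_eq_zero_of_zero_products
    (hR : IsIdempotentGenerated (⊤ : Subalgebra 𝕜 R)) {m : ℕ}
    (F : ContinuousMultilinearMap 𝕜 (fun _ : Fin (m + 1) => R) X)
    (h₀ : ∀ a, (∀ i : Fin m, a i.castSucc * a i.succ = 0) → F a = 0)
    (h₁ : ∀ a (i : Fin m), a i.castSucc = 1 → F a = 0) (a : Fin (m + 1) → R) : F a = 0 := by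
  suffices ∀ (k : ℕ) (a : Fin (m + 1) → R),
      (∀ i : Fin m, k ≤ i → a i.castSucc * a i.succ = 0) → F a = 0 from
    this m a fun i hi => absurd i.2 hi.not_gt
  intro k
  induction k with
  | zero => exact fun a ha => h₀ a fun i => ha i (Nat.zero_le _)
  | succ k ih =>
    intro a ha
    rcases le_or_gt m k with hk | hk
    · exact ih a fun i hi => absurd i.2 (hk.trans hi).not_gt
    let i₀ : Fin m := ⟨k, hk⟩
    have hne : i₀.castSucc ≠ i₀.succ := Fin.castSucc_lt_succ.ne
    have hswap := apply_one_eq_of_zero_products hR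
      (φ := fun b y => F (Function.update (Function.update a i₀.castSucc b) i₀.succ
        (y * a i₀.succ)))
      (fun y => by
        simp only [Function.update_comm hne]
        exact (F.toContinuousLinearMap (Function.update a i₀.succ (y * a i₀.succ))
          i₀.castSucc).isBoundedLinearMap)
      (fun b => ((F.toContinuousLinearMap (Function.update a i₀.castSucc b) i₀.succ).comp
        ((ContinuousLinearMap.mul 𝕜 R).flip (a i₀.succ))).isBoundedLinearMap)
      (fun b y hby => ih _ fun i hi => consecutive_mul_update_eq_zero (fun i hi => ha i hi) hby hi)
      (a i₀.castSucc)
    calc F a = _ := by simp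
      _ = _ := hswap
      _ = 0 := h₁ _ i₀ (by rw [Function.update_of_ne hne, Function.update_self])

end ZeroProducts

section Contraction

variable {R : Type*} [MulOneClass R] {n : ℕ}

theorem contractNth_eq_removeNth_castSucc {a : Fin (n + 1) → R} {j : Fin n}
    (h : a j.castSucc = 1) :
    Fin.contractNth j.castSucc (· * ·) a = j.castSucc.removeNth a := by
  funext i
  simp only [Fin.contractNth, Fin.removeNth, Fin.succAbove, Fin.lt_def, Fin.val_castSucc]
  split_ifs with h₁ h₂
  · rfl
  · rw [Fin.ext h₂, h, one_mul]
  · rfl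

theorem contractNth_eq_removeNth_succ {a : Fin (n + 1) → R} {j : Fin n} (h : a j.succ = 1) :
    Fin.contractNth j.castSucc (· * ·) a = j.succ.removeNth a := by
  funext i
  simp only [Fin.contractNth, Fin.removeNth, Fin.succAbove, Fin.lt_def, Fin.val_castSucc,
    Fin.val_succ]
  split_ifs with h₁ h₂ h₃ h₄ h₅
  any_goals omega
  · rfl
  · rw [Fin.ext h₃, h, mul_one]
  · rfl

theorem continuous_contractNth {R : Type*} [Mul R] [TopologicalSpace R] [ContinuousMul R] {n : ℕ}
    (j : Fin n) : Continuous fun a : Fin (n + 1) → R => Fin.contractNth j.castSucc (· * ·) a := by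
  refine continuous_pi fun i => ?_
  simp only [Fin.contractNth]
  split_ifs <;> fun_prop

end Contraction

section Coboundary

variable {R X : Type*} [NormedRing R] [NormedAlgebra ℂ R] [NormedAddCommGroup X] [NormedSpace ℂ X]
  (B : BanachBimodule R X) {n : ℕ} (T : MultilinearMap ℂ (fun _ : Fin n => R) X)

theorem cocycleBoundary_apply (a : Fin (n + 1) → R) :
    cocycleBoundary B T a = B.l (a 0) (T (Fin.tail a))
      + ∑ j : Fin n, (-1 : ℤ) ^ ((j : ℕ) + 1) • T (Fin.contractNth j.castSucc (· * ·) a)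
      + (-1 : ℤ) ^ (n + 1) • B.r (a (Fin.last n)) (T (Fin.init a)) :=
  rfl

theorem exists_contractNth_update_eq (j : Fin n) (p : Fin (n + 1)) (a : Fin (n + 1) → R) :
    ∃ (i : Fin n) (L : R →ₗ[ℂ] R), ∀ x, Fin.contractNth j.castSucc (· * ·) (Function.update a p x) =
      Function.update (Fin.contractNth j.castSucc (· * ·) a) i (L x) := by
  have hjp : p = j.castSucc ∨ p = j.succ ∨ (p : ℕ) ≠ j ∧ (p : ℕ) ≠ j + 1 := by
    simp only [Fin.ext_iff, Fin.val_castSucc, Fin.val_succ]; omega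
  rcases hjp with rfl | rfl | hp
  · refine ⟨j, LinearMap.mulRight ℂ (a j.succ), fun x => funext fun i => ?_⟩
    simp only [Fin.contractNth, Function.update_apply, Fin.ext_iff, Fin.val_castSucc, Fin.val_succ,
      LinearMap.mulRight_apply]
    split_ifs <;> first | rfl | omega | (obtain rfl : i = j := Fin.ext (by omega); rfl)
  · refine ⟨j, LinearMap.mulLeft ℂ (a j.castSucc), fun x => funext fun i => ?_⟩
    simp only [Fin.contractNth, Function.update_apply, Fin.ext_iff, Fin.val_castSucc, Fin.val_succ,
      LinearMap.mulLeft_apply]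
    split_ifs <;> first | rfl | omega | (obtain rfl : i = j := Fin.ext (by omega); rfl)
  · refine ⟨j.predAbove p, LinearMap.id, fun x => funext fun i => ?_⟩
    simp only [Fin.contractNth, Function.update_apply, Fin.ext_iff, Fin.val_castSucc, Fin.val_succ,
      LinearMap.id_apply, Fin.predAbove, Fin.lt_def]
    split_ifs <;> simp_all <;> omega

/-- The summand `a ↦ T(…, a_j a_{j+1}, …)` of the Hochschild coboundary, as a multilinear map. -/
noncomputable def contractedMap (j : Fin n) : MultilinearMap ℂ (fun _ : Fin (n + 1) => R) X :=
  MultilinearMap.mk' (fun a => T (Fin.contractNth j.castSucc (· * ·) a))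
    (fun a p x y => by
      obtain ⟨i, L, hL⟩ := exists_contractNth_update_eq j p a
      simp only [hL, map_add, T.map_update_add])
    (fun a p c x => by
      obtain ⟨i, L, hL⟩ := exists_contractNth_update_eq j p a
      simp only [hL, map_smul, T.map_update_smul])

/-- The Hochschild coboundary of `T`, as a multilinear map. -/
noncomputable def coboundaryMap : MultilinearMap ℂ (fun _ : Fin (n + 1) => R) X :=
  LinearMap.uncurryLeft
      { toFun := fun x => (B.l x).compMultilinearMap T
        map_add' := fun x y => by ext; simp
        map_smul' := fun c x => by ext; simp }
    + ∑ j : Fin n, (-1 : ℤ) ^ ((j : ℕ) + 1) • contractedMap T j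
    + (-1 : ℤ) ^ (n + 1) • MultilinearMap.uncurryRight (B.r.flip.compMultilinearMap T)

theorem coboundaryMap_apply (a : Fin (n + 1) → R) :
    coboundaryMap B T a = cocycleBoundary B T a := by
  simp only [coboundaryMap, add_apply, sum_apply, smul_apply]
  rfl

theorem continuous_l : Continuous fun p : R × X => B.l p.1 p.2 := by
  obtain ⟨C, hC⟩ := B.l_bdd
  exact (LinearMap.mkContinuous₂ B.l C hC).continuous₂

theorem continuous_r : Continuous fun p : R × X => B.r p.1 p.2 := by
  obtain ⟨C, hC⟩ := B.r_bdd
  exact (LinearMap.mkContinuous₂ B.r C hC).continuous₂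

variable {T}

theorem continuous_cocycleBoundary (hT : Continuous T) : Continuous (cocycleBoundary B T) := by
  have htail : Continuous fun a : Fin (n + 1) → R => (a 0, T (Fin.tail a)) :=
    (continuous_apply 0).prodMk (hT.comp (by unfold Fin.tail; fun_prop))
  have hinit : Continuous fun a : Fin (n + 1) → R => (a (Fin.last n), T (Fin.init a)) :=
    (continuous_apply _).prodMk (hT.comp (by unfold Fin.init; fun_prop))
  have hcontract (j : Fin n) :
      Continuous fun a : Fin (n + 1) → R => T (Fin.contractNth j.castSucc (· * ·) a) :=
    hT.comp (continuous_contractNth j)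
  have hsum := continuous_finsetSum Finset.univ fun (j : Fin n) _ =>
    (hcontract j).const_smul ((-1 : ℤ) ^ ((j : ℕ) + 1))
  exact (((continuous_l B).comp htail).add hsum).add
    (((continuous_r B).comp hinit).const_smul ((-1 : ℤ) ^ (n + 1)))

theorem map_contractNth_of_normalized (hT : ∀ a : Fin n → R, (∃ i, a i = 1) → T a = 0)
    {a : Fin (n + 1) → R} {p : Fin (n + 1)} (hp : a p = 1) (j : Fin n) :
    T (Fin.contractNth j.castSucc (· * ·) a) =
      (if p = j.castSucc then T (p.removeNth a) else 0)
        + if p = j.succ then T (p.removeNth a) else 0 := by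
  by_cases hc : p = j.castSucc
  · subst hc
    rw [contractNth_eq_removeNth_castSucc hp, if_pos rfl, if_neg Fin.castSucc_lt_succ.ne, add_zero]
  by_cases hs : p = j.succ
  · subst hs
    rw [contractNth_eq_removeNth_succ hp, if_pos rfl, if_neg hc, zero_add]
  rw [if_neg hc, if_neg hs, add_zero]
  refine hT _ ⟨j.predAbove p, ?_⟩
  rw [← hp]
  rcases lt_or_gt_of_ne hc with hlt | hgt
  · have hlt' : (p : ℕ) < j := hlt
    simp [Fin.contractNth, Fin.predAbove_of_le_castSucc _ _ hlt.le, hlt']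
  · have hgt' : (j : ℕ) < p := hgt
    have hs' : (p : ℕ) ≠ j + 1 := fun h => hs (Fin.ext h)
    have h₁ : ¬ (p : ℕ) - 1 < j := by omega
    have h₂ : (p : ℕ) - 1 ≠ j := by omega
    simp [Fin.contractNth, Fin.predAbove_of_castSucc_lt _ _ hgt, h₁, h₂]

/-- The faces of the coboundary that drop the unit cancel in pairs, all other faces vanish. -/
theorem cocycleBoundary_eq_zero_of_normalized (hl : ∀ x, B.l 1 x = x) (hr : ∀ x, B.r 1 x = x)
    (hT : ∀ a : Fin n → R, (∃ i, a i = 1) → T a = 0) {a : Fin (n + 1) → R}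
    {p : Fin (n + 1)} (hp : a p = 1) : cocycleBoundary B T a = 0 := by
  have hleft : B.l (a 0) (T (Fin.tail a)) = if p = 0 then T (p.removeNth a) else 0 := by
    rcases Fin.eq_zero_or_eq_succ p with rfl | ⟨i, rfl⟩
    · rw [hp, hl, if_pos rfl, Fin.removeNth_zero]
    · rw [if_neg (Fin.succ_ne_zero i), hT _ ⟨i, hp⟩, map_zero]
  have hright : B.r (a (Fin.last n)) (T (Fin.init a)) =
      if p = Fin.last n then T (p.removeNth a) else 0 := by
    rcases Fin.eq_castSucc_or_eq_last p with ⟨i, rfl⟩ | rfl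
    · rw [if_neg (Fin.castSucc_lt_last i).ne, hT _ ⟨i, hp⟩, map_zero]
    · rw [hp, hr, if_pos rfl, Fin.removeNth_last]
  have hsucc : ∑ k : Fin (n + 1), (-1 : ℤ) ^ (k : ℕ) • (if p = k then T (p.removeNth a) else 0) =
      (-1 : ℤ) ^ (p : ℕ) • T (p.removeNth a) := by simp
  have hcast : ∑ k : Fin (n + 1), (-1 : ℤ) ^ ((k : ℕ) + 1) •
      (if p = k then T (p.removeNth a) else 0) = (-1 : ℤ) ^ ((p : ℕ) + 1) • T (p.removeNth a) := by
    simp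
  rw [Fin.sum_univ_succ] at hsucc
  rw [Fin.sum_univ_castSucc] at hcast
  rw [cocycleBoundary_apply, hleft, hright]
  simp only [map_contractNth_of_normalized hT hp, smul_add, Finset.sum_add_distrib]
  simp only [Fin.val_zero, pow_zero, one_smul, Fin.val_succ] at hsucc
  simp only [Fin.val_castSucc, Fin.val_last] at hcast
  calc _ = _ := by abel
    _ = _ := congrArg₂ (· + ·) hsucc hcast
    _ = 0 := by rw [pow_succ]; simp

theorem cocycleBoundary_mul_eq_zero (hlocal : ∀ a, ∃ T', IsBoundedCocycle B T' ∧ T a = T' a)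
    {a : Fin (n + 1) → R} (ha : ∀ i : Fin n, a i.castSucc * a i.succ = 0) {c : R}
    (hc : a (Fin.last n) * c = 0) : B.r c (cocycleBoundary B T a) = 0 := by
  obtain ⟨T', ⟨-, hT'⟩, hTT'⟩ := hlocal (Fin.tail a)
  have hcontract (S : MultilinearMap ℂ (fun _ : Fin n => R) X) (j : Fin n) :
      S (Fin.contractNth j.castSucc (· * ·) a) = 0 :=
    S.map_coord_zero j (by rw [Fin.contractNth_apply_of_eq _ _ _ _ rfl, ha])
  have hreduce (S : MultilinearMap ℂ (fun _ : Fin n => R) X) :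
      B.r c (cocycleBoundary B S a) = B.r c (B.l (a 0) (S (Fin.tail a))) := by
    simp only [cocycleBoundary_apply, hcontract, smul_zero, Finset.sum_const_zero, add_zero,
      map_add, map_zsmul, ← B.r_mul, hc, map_zero, LinearMap.zero_apply]
  rw [hreduce, hTT', ← hreduce, hT', map_zero]

theorem cocycleBoundary_eq_zero_of_local_of_normalized
    (hR : IsIdempotentGenerated (⊤ : Subalgebra ℂ R)) (hl : ∀ x, B.l 1 x = x)
    (hr : ∀ x, B.r 1 x = x) (hT : ∀ a : Fin n → R, (∃ i, a i = 1) → T a = 0)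
    (hcont : Continuous T) (hlocal : ∀ a, ∃ T', IsBoundedCocycle B T' ∧ T a = T' a)
    (a : Fin (n + 1) → R) : cocycleBoundary B T a = 0 := by
  let F : ContinuousMultilinearMap ℂ (fun _ : Fin (n + 2) => R) X :=
    { MultilinearMap.uncurryRight (B.r.flip.compMultilinearMap (coboundaryMap B T)) with
      cont := by
        have hinit : Continuous fun a : Fin (n + 2) → R =>
            (a (Fin.last _), cocycleBoundary B T (Fin.init a)) :=
          (continuous_apply _).prodMk
            ((continuous_cocycleBoundary B hcont).comp (by unfold Fin.init; fun_prop))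
        exact (continuous_congr fun a => by simp [coboundaryMap_apply]).2
          ((continuous_r B).comp hinit) }
  have hF (a : Fin (n + 2) → R) :
      F a = B.r (a (Fin.last _)) (cocycleBoundary B T (Fin.init a)) := by
    rw [← coboundaryMap_apply]; rfl
  have hzero := multilinear_eq_zero_of_zero_products hR F
    (fun a ha => (hF a).trans (cocycleBoundary_mul_eq_zero B hlocal
      (fun i => ha i.castSucc) (ha (Fin.last n))))
    (fun a i hi => (hF a).trans (by
      rw [cocycleBoundary_eq_zero_of_normalized B hl hr hT (p := i) hi, map_zero]))
    (Fin.snoc a 1)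
  rwa [hF, Fin.snoc_last, hr, Fin.init_snoc] at hzero

end Coboundary

section Unitization

variable {R X : Type*} [NormedRing R] [NormedAlgebra ℂ R] [NormedAddCommGroup X] [NormedSpace ℂ X]

/-- The extension of an action of `R` to `R × ℂ` in which `(0, 1)` acts as the projection
`x ↦ x - 1 · x`, so that the unit of `R × ℂ` acts as the identity. -/
noncomputable def unitizationAction (l : R →ₗ[ℂ] X →ₗ[ℂ] X) : R × ℂ →ₗ[ℂ] X →ₗ[ℂ] X :=
  l.coprod (LinearMap.toSpanSingleton ℂ _ (LinearMap.id - l 1))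

theorem unitizationAction_apply (l : R →ₗ[ℂ] X →ₗ[ℂ] X) (a : R × ℂ) (x : X) :
    unitizationAction l a x = l a.1 x + a.2 • (x - l 1 x) := by
  simp [unitizationAction]

theorem exists_norm_unitizationAction_le {l : R →ₗ[ℂ] X →ₗ[ℂ] X}
    (h : ∃ C : ℝ, ∀ a x, ‖l a x‖ ≤ C * ‖a‖ * ‖x‖) :
    ∃ C : ℝ, ∀ a x, ‖unitizationAction l a x‖ ≤ C * ‖a‖ * ‖x‖ := by
  obtain ⟨C, hC⟩ := h
  let L : R × ℂ →L[ℂ] X →L[ℂ] X := (LinearMap.mkContinuous₂ l C hC).coprod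
    (ContinuousLinearMap.toSpanSingleton ℂ (.id ℂ X - LinearMap.mkContinuous₂ l C hC 1))
  refine ⟨‖L‖, fun a x => ?_⟩
  have hL : unitizationAction l a x = L a x := by simp [unitizationAction_apply, L]
  exact hL ▸ L.le_opNorm₂ a x

/-- The unital bimodule over `R × ℂ` obtained from a possibly non-unital bimodule over `R`;
`R × ℂ` is the unitization of `R`, with `(a, c)` standing for `a + c (1' - 1)`, where `1'` is the
adjoined unit. -/
noncomputable def unitizationBimodule (B : BanachBimodule R X) : BanachBimodule (R × ℂ) X where
  l := unitizationAction B.l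
  r := unitizationAction B.r
  l_mul a b x := by
    simp only [unitizationAction_apply, Prod.fst_mul, Prod.snd_mul, map_add, map_sub, map_smul,
      ← B.l_mul, mul_one, one_mul, mul_smul, sub_self, smul_zero, add_zero]
    module
  r_mul a b x := by
    simp only [unitizationAction_apply, Prod.fst_mul, Prod.snd_mul, map_add, map_sub, map_smul,
      ← B.r_mul, mul_one, one_mul, mul_smul, sub_self, smul_zero, add_zero]
    module
  l_r a b x := by
    simp only [unitizationAction_apply, map_add, map_sub, map_smul, B.l_r]
    module
  l_bdd := exists_norm_unitizationAction_le B.l_bdd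
  r_bdd := exists_norm_unitizationAction_le B.r_bdd

theorem unitizationBimodule_l_one (B : BanachBimodule R X) (x : X) :
    (unitizationBimodule B).l 1 x = x := by
  simp [unitizationBimodule, unitizationAction_apply]

theorem unitizationBimodule_r_one (B : BanachBimodule R X) (x : X) :
    (unitizationBimodule B).r 1 x = x := by
  simp [unitizationBimodule, unitizationAction_apply]

theorem IsIdempotentGenerated.prod_complex (hR : IsIdempotentGenerated (⊤ : Subalgebra ℂ R)) :
    IsIdempotentGenerated (⊤ : Subalgebra ℂ (R × ℂ)) := by
  rintro ⟨x, c⟩ -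
  have hx : ((x, 0) : R × ℂ) ∈ idempotentClosure (⊤ : Subalgebra ℂ (R × ℂ)) :=
    map_mem_idempotentClosure (S' := ⊤) (NonUnitalAlgHom.inl ℂ R ℂ)
      (continuous_id.prodMk continuous_const) (fun _ _ => trivial) (hR x trivial)
  have h₁ : ((0, 1) : R × ℂ) ∈ idempotentClosure (⊤ : Subalgebra ℂ (R × ℂ)) :=
    mem_idempotentClosure_of_isIdempotentElem (by simp [IsIdempotentElem]) trivial
  simpa using add_mem hx (SMulMemClass.smul_mem c h₁)

/-- The linear projection of `R × ℂ` onto `R` along the unit `(1, 1)`. -/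
noncomputable def unitizationProj (R : Type*) [NormedRing R] [NormedAlgebra ℂ R] :
    R × ℂ →L[ℂ] R :=
  ContinuousLinearMap.fst ℂ R ℂ -
    (ContinuousLinearMap.toSpanSingleton ℂ (1 : R)).comp (ContinuousLinearMap.snd ℂ R ℂ)

theorem unitizationProj_inl (a : R) : unitizationProj R (a, 0) = a := by
  simp [unitizationProj]

theorem unitizationProj_one : unitizationProj R 1 = 0 := by
  simp [unitizationProj]

variable (B : BanachBimodule R X) {n : ℕ} (T : MultilinearMap ℂ (fun _ : Fin n => R) X)

/-- The extension of an `n`-linear map on `R` to `R × ℂ` that vanishes as soon as one of the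
arguments is the unit. -/
noncomputable def normalizedExtension : MultilinearMap ℂ (fun _ : Fin n => R × ℂ) X :=
  T.compLinearMap fun _ => (unitizationProj R).toLinearMap

theorem continuous_normalizedExtension {T : MultilinearMap ℂ (fun _ : Fin n => R) X}
    (hT : Continuous T) : Continuous (normalizedExtension T) :=
  hT.comp (continuous_pi fun i => (unitizationProj R).continuous.comp (continuous_apply i))

theorem normalizedExtension_inl (a : Fin n → R) :
    normalizedExtension T (fun i => (a i, 0)) = T a := by
  simp [normalizedExtension, unitizationProj_inl]

theorem normalizedExtension_eq_zero (a : Fin n → R × ℂ) (h : ∃ i, a i = 1) :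
    normalizedExtension T a = 0 := by
  obtain ⟨i, hi⟩ := h
  exact T.map_coord_zero i (by simp [hi, unitizationProj_one])

theorem cocycleBoundary_normalizedExtension_inl (a : Fin (n + 1) → R) :
    cocycleBoundary (unitizationBimodule B) (normalizedExtension T) (fun i => (a i, 0)) =
      cocycleBoundary B T a := by
  have hcontract (j : Fin n) :
      Fin.contractNth j.castSucc (· * ·) (fun i => ((a i, 0) : R × ℂ)) =
        fun i => (Fin.contractNth j.castSucc (· * ·) a i, 0) :=
    (Fin.comp_contractNth (· * ·) (· * ·) (map_mul (NonUnitalAlgHom.inl ℂ R ℂ)) _ a).symm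
  have htail := normalizedExtension_inl T (Fin.tail a)
  have hinit := normalizedExtension_inl T (Fin.init a)
  simp only [cocycleBoundary_apply, hcontract, normalizedExtension_inl]
  simp only [unitizationBimodule, unitizationAction_apply, zero_smul, add_zero]
  exact congrArg₂ (fun x y => B.l (a 0) x + _ + _ • B.r (a (Fin.last n)) y) htail hinit

variable {B T}

theorem IsBoundedCocycle.normalizedExtension (hT : IsBoundedCocycle B T) :
    IsBoundedCocycle (unitizationBimodule B) (normalizedExtension T) := by
  refine ⟨continuous_normalizedExtension hT.1, fun a => ?_⟩
  have hspan : Submodule.span ℂ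
      (Set.range fun o : Option R => o.elim (1 : R × ℂ) fun a => (a, 0)) = ⊤ := by
    refine Submodule.eq_top_iff'.2 fun x => ?_
    have hx : x = (unitizationProj R x, 0) + x.2 • (1 : R × ℂ) := by
      ext <;> simp [unitizationProj]
    rw [hx]
    exact add_mem (Submodule.subset_span ⟨some _, rfl⟩)
      (Submodule.smul_mem _ _ (Submodule.subset_span ⟨none, rfl⟩))
  suffices coboundaryMap (unitizationBimodule B) (_root_.normalizedExtension T) = 0 by
    rw [← coboundaryMap_apply, this, zero_apply]
  refine MultilinearMap.ext_of_span_eq_top (fun _ => hspan) fun o => ?_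
  rw [coboundaryMap_apply, zero_apply]
  by_cases ho : ∃ p, o p = none
  · obtain ⟨p, hp⟩ := ho
    exact cocycleBoundary_eq_zero_of_normalized _ (unitizationBimodule_l_one B)
      (unitizationBimodule_r_one B) (normalizedExtension_eq_zero T) (p := p) (by simp [hp])
  · push Not at ho
    choose a ha using fun p => Option.ne_none_iff_exists'.1 (ho p)
    simp only [ha, Option.elim_some]
    rw [cocycleBoundary_normalizedExtension_inl, hT.2]

theorem IsBoundedLocalCocycle.isBoundedCocycle (hR : IsIdempotentGenerated (⊤ : Subalgebra ℂ R))
    (hT : IsBoundedLocalCocycle B T) : IsBoundedCocycle B T := by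
  refine ⟨hT.1, fun a => ?_⟩
  rw [← cocycleBoundary_normalizedExtension_inl]
  refine cocycleBoundary_eq_zero_of_local_of_normalized _ hR.prod_complex
    (unitizationBimodule_l_one B) (unitizationBimodule_r_one B) (normalizedExtension_eq_zero T)
    (continuous_normalizedExtension hT.1) (fun b => ?_) _
  obtain ⟨T', hT', hTT'⟩ := hT.2 fun i => unitizationProj R (b i)
  exact ⟨_, hT'.normalizedExtension, hTT'⟩

end Unitization

section BasisMaps

variable {K V Ω Ω' : Type*} [NormedAddCommGroup K] [InnerProductSpace ℂ K]
  [NormedAddCommGroup V] [InnerProductSpace ℂ V]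

theorem ext_on_hilbertBasis {G : Type*} [NormedAddCommGroup G] [NormedSpace ℂ G]
    (b : HilbertBasis Ω ℂ K) {S T : K →L[ℂ] G} (h : ∀ i, S (b i) = T (b i)) : S = T :=
  ContinuousLinearMap.ext_on
    (Submodule.dense_iff_topologicalClosure_eq_top.2 b.dense_span) (Set.forall_mem_range.2 h)

theorem exists_lp_diagonal {ι : Type*} [DecidableEq ι] {α : ι → ℂ} {C : ℝ} (hC : 0 ≤ C)
    (hα : ∀ i, ‖α i‖ ≤ C) :
    ∃ D : lp (fun _ : ι => ℂ) 2 →L[ℂ] lp (fun _ : ι => ℂ) 2,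
      (∀ i z, D (lp.single 2 i z) = lp.single 2 i (α i * z)) ∧ ‖D‖ ≤ C := by
  let a : lp (fun _ : ι => ℂ) ⊤ := ⟨α, memℓp_infty ⟨C, Set.forall_mem_range.2 hα⟩⟩
  refine ⟨lp.holderL 2 (fun _ => ContinuousLinearMap.mul ℂ ℂ) (K := 1) (fun _ => by simp) a,
    fun i z => ?_, ?_⟩
  · ext j
    by_cases hij : j = i
    · subst hij; simp [lp.holderL, a]
    · simp [lp.holderL, a, Pi.single_eq_of_ne hij]
  · calc _ ≤ 1 * ‖a‖ := ContinuousLinearMap.le_of_opNorm_le _ (lp.norm_holderL_le 2 _ _) a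
      _ ≤ C := by rw [one_mul]; exact lp.norm_le_of_forall_le hC hα

theorem exists_map_hilbertBasis [CompleteSpace K] [CompleteSpace V] (b : HilbertBasis Ω ℂ K)
    (c : HilbertBasis Ω' ℂ V) {σ : Ω → Ω'} {α : Ω → ℂ} {C : ℝ} (hC : 0 ≤ C) (hα : ∀ i, ‖α i‖ ≤ C)
    (hσ : Set.InjOn σ {i | α i ≠ 0}) :
    ∃ W : K →L[ℂ] V, (∀ i, W (b i) = α i • c (σ i)) ∧ ‖W‖ ≤ C := by
  classical
  let ι := {i // α i ≠ 0}
  have hb : Orthonormal ℂ fun i : ι => b i := b.orthonormal.comp _ Subtype.val_injective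
  have hc : Orthonormal ℂ fun i : ι => c (σ i) :=
    c.orthonormal.comp (fun i : ι => σ i) (Set.injOn_iff_injective.1 hσ)
  let U := hb.orthogonalFamily.linearIsometry.toContinuousLinearMap
  let J := hc.orthogonalFamily.linearIsometry.toContinuousLinearMap
  obtain ⟨D, hD, hDC⟩ := exists_lp_diagonal (α := fun i : ι => α i) hC fun i => hα i
  have hU (x : K) (j : ι) : U.adjoint x j = inner ℂ (b j) x := by
    simpa [lp.inner_single_left, U, OrthogonalFamily.linearIsometry_apply_single]
      using ContinuousLinearMap.adjoint_inner_right U (lp.single 2 j 1) x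
  refine ⟨J ∘L D ∘L U.adjoint, fun i => ?_, ?_⟩
  · by_cases hi : α i = 0
    · have : U.adjoint (b i) = 0 := by
        ext j
        rw [hU, b.orthonormal.2 fun h : (j : Ω) = i => j.2 (h ▸ hi)]
        rfl
      simp [this, hi]
    · have : U.adjoint (b i) = lp.single 2 (⟨i, hi⟩ : ι) 1 := by
        ext j
        rw [hU, orthonormal_iff_ite.1 b.orthonormal]
        simp [Pi.single_apply, Subtype.ext_iff]
      simp [this, hD, J, OrthogonalFamily.linearIsometry_apply_single]
  · have hUC : ‖U.adjoint‖ ≤ 1 := by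
      rw [LinearIsometryEquiv.norm_map]; exact LinearIsometry.norm_toContinuousLinearMap_le _
    calc _ ≤ ‖J‖ * (‖D‖ * ‖U.adjoint‖) :=
          (J.opNorm_comp_le _).trans (by gcongr; exact D.opNorm_comp_le _)
      _ ≤ 1 * (C * 1) := by gcongr; exact LinearIsometry.norm_toContinuousLinearMap_le _
      _ = C := by ring

end BasisMaps

section Coordinates

variable {K Ω : Type*} [NormedAddCommGroup K] [InnerProductSpace ℂ K]

theorem inner_hilbertBasis [DecidableEq Ω] (b : HilbertBasis Ω ℂ K) (i j : Ω) :
    inner ℂ (b i) (b j) = if i = j then (1 : ℂ) else 0 :=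
  orthonormal_iff_ite.1 b.orthonormal i j

/-- The orthogonal projection onto the line spanned by the `i`-th vector of a Hilbert basis. -/
noncomputable def coordProj (b : HilbertBasis Ω ℂ K) (i : Ω) : K →L[ℂ] K :=
  InnerProductSpace.rankOne ℂ (b i) (b i)

theorem coordProj_apply (b : HilbertBasis Ω ℂ K) (i : Ω) (x : K) :
    coordProj b i x = inner ℂ (b i) x • b i := rfl

theorem coordProj_apply_basis [DecidableEq Ω] (b : HilbertBasis Ω ℂ K) (i j : Ω) :
    coordProj b i (b j) = if i = j then b j else 0 := by
  rw [coordProj_apply, inner_hilbertBasis]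
  split_ifs with h <;> simp [h]

theorem isIdempotentElem_coordProj (b : HilbertBasis Ω ℂ K) (i : Ω) :
    IsIdempotentElem (coordProj b i) :=
  InnerProductSpace.isIdempotentElem_rankOne_self (b.orthonormal.1 i)

theorem coordProj_mul_mul (b : HilbertBasis Ω ℂ K) (i : Ω) (a : K →L[ℂ] K) :
    coordProj b i * a * coordProj b i = (inner ℂ (b i) (a (b i)) : ℂ) • coordProj b i := by
  ext x
  simp [coordProj_apply, smul_smul, mul_comm]

end Coordinates

section Halving

open Function

theorem exists_involutive_subsingleton_fixedPoints (F : Type*) :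
    ∃ τ : F → F, Involutive τ ∧ (fixedPoints τ).Subsingleton := by
  rcases finite_or_infinite F with _ | _
  · obtain ⟨n, ⟨e⟩⟩ := Finite.exists_equiv_fin F
    refine ⟨fun x => e.symm (Fin.rev (e x)), fun x => by simp, fun x hx y hy => ?_⟩
    have hfix {z : F} (hz : z ∈ fixedPoints fun x => e.symm (Fin.rev (e x))) :
        2 * (e z : ℕ) + 1 = n := by
      have hz := congrArg Fin.val (e.symm_apply_eq.1 hz)
      rw [Fin.val_rev] at hz
      omega
    exact e.injective (Fin.ext (by have := hfix hx; have := hfix hy; omega))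
  · obtain ⟨e⟩ : Nonempty (F ⊕ F ≃ F) := by
      rw [← Cardinal.eq, Cardinal.mk_sum, Cardinal.lift_id]
      exact Cardinal.add_eq_self (Cardinal.aleph0_le_mk F)
    refine ⟨fun x => e (e.symm x).swap, fun x => by simp, fun x hx => ?_⟩
    have hx : (e.symm x).swap = e.symm x := e.eq_symm_apply.2 hx
    cases h : e.symm x <;> simp [h] at hx

theorem exists_involutive_injOn_fixedPoints {Ω κ : Type*} (k : Ω → κ) :
    ∃ τ : Ω → Ω, Involutive τ ∧ (∀ ω, k (τ ω) = k ω) ∧ Set.InjOn k (fixedPoints τ) := by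
  choose τ hτ hfix using fun j => exists_involutive_subsingleton_fixedPoints {ω // k ω = j}
  have hcongr {ω : Ω} {j : κ} (h : k ω = j) : (τ (k ω) ⟨ω, rfl⟩ : Ω) = τ j ⟨ω, h⟩ := by
    subst h; rfl
  have hk (ω : Ω) : k (τ (k ω) ⟨ω, rfl⟩) = k ω := (τ (k ω) ⟨ω, rfl⟩).2
  refine ⟨fun ω => τ (k ω) ⟨ω, rfl⟩, fun ω => ?_, hk, fun x hx y hy hxy => ?_⟩
  · exact (hcongr (hk ω)).trans (congrArg Subtype.val (hτ (k ω) ⟨ω, rfl⟩))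
  · exact congrArg Subtype.val <| hfix (k y)
      (show (⟨x, hxy⟩ : {ω // k ω = k y}) ∈ _ from Subtype.ext ((hcongr hxy).symm.trans hx))
      (show (⟨y, rfl⟩ : {ω // k ω = k y}) ∈ _ from Subtype.ext hy)

variable {K : Type*} [NormedAddCommGroup K] [InnerProductSpace ℂ K] [CompleteSpace K]

-- `w` and `w'` exchange the two members of every pair of basis vectors matched by an involution.
open Classical in
theorem exists_halving_operators {Ω κ : Type*} (b : HilbertBasis Ω ℂ K) (k : Ω → κ) :
    ∃ (w w' : K →L[ℂ] K) (Λ : Set Ω), Set.InjOn k Λ ∧ w * w = 0 ∧ w * w' * w = w ∧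
      (∀ ω, (1 - (w * w' + w' * w)) (b ω) = if ω ∈ Λ then b ω else 0) ∧
      ∀ (q : K →L[ℂ] K) (f : κ → ℂ), (∀ ω, q (b ω) = f (k ω) • b ω) →
        Commute w q ∧ Commute w' q := by
  obtain ⟨τ, hτ, hk, hΛ⟩ := exists_involutive_injOn_fixedPoints k
  let : LinearOrder Ω := IsWellOrder.linearOrder WellOrderingRel
  have hmap (p : Ω → Prop) :
      ∃ W : K →L[ℂ] K, ∀ ω, W (b ω) = if p ω then b (τ ω) else 0 := by
    obtain ⟨W, hW, -⟩ := exists_map_hilbertBasis b b (σ := τ) (α := fun ω => if p ω then 1 else 0)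
      zero_le_one (fun ω => by split_ifs <;> simp) hτ.injective.injOn
    exact ⟨W, fun ω => by simp only [hW, ite_smul, one_smul, zero_smul]⟩
  obtain ⟨w, hw⟩ := hmap fun ω => ω < τ ω
  obtain ⟨w', hw'⟩ := hmap fun ω => τ ω < ω
  have hΛ_iff (ω : Ω) : ω ∈ fixedPoints τ ↔ τ ω = ω := Iff.rfl
  have htri (ω : Ω) : (ω < τ ω ∧ ¬ τ ω < ω ∧ τ ω ≠ ω) ∨ (¬ ω < τ ω ∧ ¬ τ ω < ω ∧ τ ω = ω) ∨
      (¬ ω < τ ω ∧ τ ω < ω ∧ τ ω ≠ ω) := by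
    rcases lt_trichotomy ω (τ ω) with h | h | h
    · exact Or.inl ⟨h, h.not_gt, h.ne'⟩
    · exact Or.inr (Or.inl ⟨h.not_lt, h.not_gt, h.symm⟩)
    · exact Or.inr (Or.inr ⟨h.not_gt, h, h.ne⟩)
  refine ⟨w, w', fixedPoints τ, hΛ, ext_on_hilbertBasis b fun ω => ?_,
    ext_on_hilbertBasis b fun ω => ?_, fun ω => ?_, fun q f hq =>
      ⟨ext_on_hilbertBasis b fun ω => ?_, ext_on_hilbertBasis b fun ω => ?_⟩⟩ <;>
    rcases htri ω with h | h | h <;> simp [*, hτ ω]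

theorem isIdempotentGenerated_continuousLinearMap :
    IsIdempotentGenerated (⊤ : Subalgebra ℂ (K →L[ℂ] K)) := by
  intro T _
  obtain ⟨_, b, -⟩ := exists_hilbertBasis ℂ K
  obtain ⟨w, w', Λ, hΛ, hww, hpi, hf, -⟩ := exists_halving_operators b fun _ => ()
  refine mem_idempotentClosure_of_halving trivial trivial trivial hww hpi ?_
  rcases Λ.eq_empty_or_nonempty with rfl | ⟨l, hl⟩
  · have : 1 - (w * w' + w' * w) = 0 := ext_on_hilbertBasis b fun ω => by simp [hf]
    simp [this]
  · have hfl : 1 - (w * w' + w' * w) = coordProj b l := ext_on_hilbertBasis b fun ω => by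
      classical
      have hωl : ω ∈ Λ ↔ l = ω := ⟨fun h => hΛ hl h rfl, fun h => h ▸ hl⟩
      rw [hf, coordProj_apply_basis]
      simp only [hωl]
    rw [hfl, coordProj_mul_mul]
    exact SMulMemClass.smul_mem _
      (mem_idempotentClosure_of_isIdempotentElem (isIdempotentElem_coordProj b l) trivial)

end Halving

section Diagonal

variable {K Ω : Type*} [NormedAddCommGroup K] [InnerProductSpace ℂ K]

theorem inner_apply_of_diagonal (b : HilbertBasis Ω ℂ K) {q : K →L[ℂ] K} {d : Ω → ℂ}
    (hq : ∀ i, q (b i) = d i • b i) (i : Ω) (x : K) :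
    inner ℂ (b i) (q x) = d i * inner ℂ (b i) x := by
  classical
  have : innerSL ℂ (b i) ∘L q = d i • innerSL ℂ (b i) := ext_on_hilbertBasis b fun j => by
    by_cases h : i = j <;> simp [hq, inner_hilbertBasis, h]
  exact DFunLike.congr_fun this x

theorem norm_inner_hilbertBasis_le (b : HilbertBasis Ω ℂ K) (T : K →L[ℂ] K) (i j : Ω) :
    ‖(inner ℂ (b i) (T (b j)) : ℂ)‖ ≤ ‖T‖ := by
  have := (norm_inner_le_norm (𝕜 := ℂ) (b i) (T (b j))).trans
    (mul_le_mul_of_nonneg_left (T.le_opNorm (b j)) (norm_nonneg _))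
  rwa [b.orthonormal.1, b.orthonormal.1, one_mul, mul_one] at this

theorem ext_inner_hilbertBasis (b : HilbertBasis Ω ℂ K) {S T : K →L[ℂ] K}
    (h : ∀ i j, (inner ℂ (b i) (S (b j)) : ℂ) = inner ℂ (b i) (T (b j))) : S = T := by
  refine ext_on_hilbertBasis b fun j => b.repr.injective ?_
  ext i
  rw [b.repr_apply_apply, b.repr_apply_apply, h]

theorem commute_of_diagonal (b : HilbertBasis Ω ℂ K) {q W : K →L[ℂ] K} {c d : Ω → ℂ}
    (hq : ∀ i, q (b i) = c i • b i) (hW : ∀ i, W (b i) = d i • b i) : Commute W q :=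
  ext_on_hilbertBasis b fun i => by simp [hq, hW, smul_smul, mul_comm]

theorem mul_coordProj_of_diagonal (b : HilbertBasis Ω ℂ K) {q : K →L[ℂ] K} {d : Ω → ℂ}
    (hq : ∀ i, q (b i) = d i • b i) (i : Ω) : q * coordProj b i = d i • coordProj b i := by
  ext x
  simp only [mul_apply_eq_comp, coordProj_apply, map_smul, hq, smul_apply, smul_smul, mul_comm]

theorem coordProj_mul_of_diagonal (b : HilbertBasis Ω ℂ K) {q : K →L[ℂ] K} {d : Ω → ℂ}
    (hq : ∀ i, q (b i) = d i • b i) (i : Ω) : coordProj b i * q = d i • coordProj b i := by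
  ext x
  simp [coordProj_apply, inner_apply_of_diagonal b hq, smul_smul]

/-- The algebra of operators which are diagonal with respect to a Hilbert basis. -/
def diagonalOperators (b : HilbertBasis Ω ℂ K) : Subalgebra ℂ (K →L[ℂ] K) where
  carrier := {W | ∀ i, ∃ c : ℂ, W (b i) = c • b i}
  mul_mem' := fun {S T} hS hT i => by
    obtain ⟨c, hc⟩ := hS i
    obtain ⟨d, hd⟩ := hT i
    exact ⟨d * c, by simp [hc, hd, smul_smul]⟩
  add_mem' := fun {S T} hS hT i => by
    obtain ⟨c, hc⟩ := hS i
    obtain ⟨d, hd⟩ := hT i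
    exact ⟨c + d, by simp [hc, hd, add_smul]⟩
  algebraMap_mem' := fun c i => ⟨c, by simp [Algebra.algebraMap_eq_smul_one]⟩

theorem exists_finite_valued_approx {d : Ω → ℂ} {C : ℝ} (hd : ∀ i, ‖d i‖ ≤ C) {ε : ℝ}
    (hε : 0 < ε) : ∃ (t : Finset ℂ) (d' : Ω → ℂ), (∀ i, d' i ∈ t) ∧ ∀ i, ‖d i - d' i‖ ≤ ε := by
  obtain ⟨t, -, htf, ht⟩ := (isCompact_closedBall (0 : ℂ) C).finite_cover_balls hε
  have (i : Ω) : ∃ c ∈ t, ‖d i - c‖ ≤ ε := by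
    obtain ⟨c, hc, h⟩ := Set.mem_iUnion₂.1 (ht (mem_closedBall_zero_iff.2 (hd i)))
    exact ⟨c, hc, (mem_ball_iff_norm.1 h).le⟩
  choose d' hd't hd' using this
  exact ⟨htf.toFinset, d', fun i => htf.mem_toFinset.2 (hd't i), hd'⟩

variable [CompleteSpace K]

theorem exists_diagonal (b : HilbertBasis Ω ℂ K) {d : Ω → ℂ} {C : ℝ} (hC : 0 ≤ C)
    (hd : ∀ i, ‖d i‖ ≤ C) : ∃ W : K →L[ℂ] K, (∀ i, W (b i) = d i • b i) ∧ ‖W‖ ≤ C :=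
  exists_map_hilbertBasis b b (σ := id) hC hd Function.injective_id.injOn

open Classical in
theorem exists_diagonal_indicator (b : HilbertBasis Ω ℂ K) (p : Ω → Prop) :
    ∃ e : K →L[ℂ] K, (∀ i, e (b i) = if p i then b i else 0) ∧ IsIdempotentElem e := by
  obtain ⟨e, he, -⟩ := exists_diagonal b (d := fun i => if p i then 1 else 0) zero_le_one
    fun i => by split_ifs <;> simp
  simp only [ite_smul, one_smul, zero_smul] at he
  exact ⟨e, he, ext_on_hilbertBasis b fun i => by by_cases h : p i <;> simp [he, h]⟩

theorem diagonal_mem_idempotentClosure_of_finite (b : HilbertBasis Ω ℂ K) {W : K →L[ℂ] K}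
    {t : Finset ℂ} {d : Ω → ℂ} (hd : ∀ i, d i ∈ t) (hW : ∀ i, W (b i) = d i • b i) :
    W ∈ idempotentClosure (diagonalOperators b) := by
  classical
  choose e he hee using fun c : ℂ => exists_diagonal_indicator b fun i => d i = c
  have hsum : W = ∑ c ∈ t, c • e c := ext_on_hilbertBasis b fun i => by
    simp [hW, he, smul_ite, hd]
  rw [hsum]
  refine sum_mem fun c _ => SMulMemClass.smul_mem c <|
    mem_idempotentClosure_of_isIdempotentElem (hee c) fun i => ⟨if d i = c then 1 else 0, ?_⟩
  rw [he]; split_ifs <;> simp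

theorem isIdempotentGenerated_diagonalOperators (b : HilbertBasis Ω ℂ K) :
    IsIdempotentGenerated (diagonalOperators b) := by
  intro W hW
  choose d hWd using hW
  have hd (i : Ω) : ‖d i‖ ≤ ‖W‖ := by
    simpa [hWd, norm_smul, b.orthonormal.1] using W.le_opNorm (b i)
  refine (Metric.mem_of_closed' isClosed_idempotentClosure).2 fun ε hε => ?_
  obtain ⟨t, d', hd't, hd'⟩ := exists_finite_valued_approx hd (half_pos hε)
  obtain ⟨R, hR, hRε⟩ := exists_diagonal b (half_pos hε).le hd'
  refine ⟨W - R, diagonal_mem_idempotentClosure_of_finite b hd't fun i => ?_, ?_⟩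
  · rw [sub_apply, hWd, hR, ← sub_smul, sub_sub_cancel]
  · rw [dist_eq_norm, sub_sub_cancel]
    exact hRε.trans_lt (half_lt_self hε)

end Diagonal

section Intertwiner

variable {E : Type*} [NormedAddCommGroup E] [NormedSpace ℂ E]

/-- The algebra of pairs `(a, D)` with `D * q = q * a`. These are the pairs for which
`a × D` leaves the graph of `q` invariant. -/
def intertwiner (q : E →L[ℂ] E) : Subalgebra ℂ ((E →L[ℂ] E) × (E →L[ℂ] E)) where
  carrier := {x | x.2 * q = q * x.1}
  mul_mem' := fun {x y} hx hy => by
    rw [Set.mem_ofPred_eq] at hx hy ⊢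
    rw [Prod.snd_mul, Prod.fst_mul, mul_assoc, hy, ← mul_assoc, hx, mul_assoc]
  add_mem' := fun {x y} hx hy => by
    rw [Set.mem_ofPred_eq] at hx hy ⊢
    rw [Prod.snd_add, Prod.fst_add, add_mul, hx, hy, mul_add]
  algebraMap_mem' := fun c => (Algebra.commutes c q)

theorem mem_intertwiner {q a D : E →L[ℂ] E} : (a, D) ∈ intertwiner q ↔ D * q = q * a :=
  Iff.rfl

end Intertwiner

section GeometricDiagonal

variable {K : Type*} [NormedAddCommGroup K] [InnerProductSpace ℂ K]

theorem inner_sub_diagonal (b : HilbertBasis ℕ ℂ K) {T δ : K →L[ℂ] K}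
    (hδ : ∀ i, δ (b i) = (inner ℂ (b i) (T (b i)) : ℂ) • b i) (i j : ℕ) :
    (inner ℂ (b i) ((T - δ) (b j)) : ℂ) = if i = j then 0 else inner ℂ (b i) (T (b j)) := by
  rw [sub_apply, inner_sub_right, hδ, inner_smul_right, inner_hilbertBasis]
  split_ifs with hij <;> simp [hij]

/-- The operator `q` is diagonal with positive eigenvalues `Q i`, each at most half of the
preceding one. -/
structure IsGeometricDiagonal (b : HilbertBasis ℕ ℂ K) (q : K →L[ℂ] K) (Q : ℕ → ℝ) : Prop where
  apply_basis : ∀ i, q (b i) = (Q i : ℂ) • b i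
  pos : ∀ i, 0 < Q i
  succ_le : ∀ i, Q (i + 1) ≤ Q i / 2

namespace IsGeometricDiagonal

variable {b : HilbertBasis ℕ ℂ K} {q a D : K →L[ℂ] K} {Q : ℕ → ℝ}

theorem ne_zero (h : IsGeometricDiagonal b q Q) (i : ℕ) : (Q i : ℂ) ≠ 0 :=
  Complex.ofReal_ne_zero.2 (h.pos i).ne'

theorem le_mul_pow (h : IsGeometricDiagonal b q Q) {i j : ℕ} (hij : j ≤ i) :
    Q i ≤ Q j * (1 / 2) ^ (i - j) := by
  induction i, hij using Nat.le_induction with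
  | base => simp
  | succ i hij ih =>
    rw [Nat.succ_sub hij, pow_succ]
    linarith [h.succ_le i]

theorem norm_div_le (h : IsGeometricDiagonal b q Q) {i j : ℕ} (hij : j ≤ i) :
    ‖(Q i / Q j : ℂ)‖ ≤ (1 / 2) ^ (i - j) := by
  rw [← Complex.ofReal_div, Complex.norm_of_nonneg (div_pos (h.pos i) (h.pos j)).le,
    div_le_iff₀' (h.pos j)]
  exact h.le_mul_pow hij

theorem mul_right_cancel (h : IsGeometricDiagonal b q Q) {S T : K →L[ℂ] K}
    (hST : S * q = T * q) : S = T := by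
  refine ext_on_hilbertBasis b fun i => smul_right_injective K (h.ne_zero i) ?_
  simpa [h.apply_basis] using DFunLike.congr_fun hST (b i)

theorem intertwiner_ext (h : IsGeometricDiagonal b q Q) {x y : (K →L[ℂ] K) × (K →L[ℂ] K)}
    (hx : x ∈ intertwiner q) (hy : y ∈ intertwiner q) (hxy : x.1 = y.1) : x = y :=
  Prod.ext hxy <| h.mul_right_cancel <| (mem_intertwiner.1 hx).trans <| by
    rw [hxy]; exact (mem_intertwiner.1 hy).symm

theorem mem_intertwiner_iff_inner (h : IsGeometricDiagonal b q Q) :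
    (a, D) ∈ intertwiner q ↔
      ∀ i j, (inner ℂ (b i) (D (b j)) : ℂ) = Q i / Q j * inner ℂ (b i) (a (b j)) := by
  have hcoord (i j : ℕ) : (inner ℂ (b i) ((D * q) (b j)) : ℂ) = inner ℂ (b i) ((q * a) (b j)) ↔
      (inner ℂ (b i) (D (b j)) : ℂ) = Q i / Q j * inner ℂ (b i) (a (b j)) := by
    rw [mul_apply_eq_comp, mul_apply_eq_comp, h.apply_basis, map_smul,
      inner_smul_right, inner_apply_of_diagonal b h.apply_basis, div_mul_eq_mul_div,
      eq_div_iff (h.ne_zero j), mul_comm]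
  simp only [mem_intertwiner, ← hcoord]
  exact ⟨fun H i j => by rw [H], fun H => ext_inner_hilbertBasis b H⟩

theorem norm_inner_le (h : IsGeometricDiagonal b q Q) {i j : ℕ} (hij : j ≤ i) :
    ‖(Q i / Q j * inner ℂ (b i) (a (b j)) : ℂ)‖ ≤ ‖a‖ * (1 / 2) ^ (i - j) := by
  rw [norm_mul, mul_comm]
  exact mul_le_mul (norm_inner_hilbertBasis_le b a i j) (h.norm_div_le hij) (norm_nonneg _)
    (norm_nonneg _)

end IsGeometricDiagonal

variable [CompleteSpace K]

theorem exists_lowerTriangular (b : HilbertBasis ℕ ℂ K) {y : ℕ → ℕ → ℂ} {C : ℝ} (hC : 0 ≤ C)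
    (hy : ∀ i j, j ≤ i → ‖y i j‖ ≤ C * (1 / 2) ^ (i - j)) :
    ∃ Y : K →L[ℂ] K, ∀ i j, (inner ℂ (b i) (Y (b j)) : ℂ) = if j ≤ i then y i j else 0 := by
  choose W hW hWC using fun d : ℕ => exists_map_hilbertBasis b b (σ := (· + d))
    (α := fun j => y (j + d) j) (C := C * (1 / 2) ^ d) (by positivity)
    (fun j => by simpa using hy (j + d) j (Nat.le_add_right j d))
    (add_left_injective d).injOn
  have hs : Summable W := .of_norm_bounded (summable_geometric_two.mul_left C) hWC
  refine ⟨∑' d, W d, fun i j => ?_⟩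
  let φ : (K →L[ℂ] K) →L[ℂ] ℂ := innerSL ℂ (b i) ∘L ContinuousLinearMap.apply ℂ K (b j)
  have hφ (d : ℕ) : φ (W d) = if i = j + d then y (j + d) j else 0 := by
    simp [φ, hW, inner_hilbertBasis]
  change φ (∑' d, W d) = _
  rw [φ.map_tsum hs, tsum_congr hφ]
  split_ifs with hji
  · have (d : ℕ) : (if i = j + d then y (j + d) j else 0) = if d = i - j then y i j else 0 := by
      grind
    simp only [this, tsum_ite_eq]
  · have (d : ℕ) : i ≠ j + d := fun hd => hji (hd ▸ Nat.le_add_right j d)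
    simp [this]

/-- The unilateral shift along a Hilbert basis. -/
noncomputable def shift (b : HilbertBasis ℕ ℂ K) : K →L[ℂ] K :=
  ((b.orthonormal.comp Nat.succ Nat.succ_injective).orthogonalFamily.linearIsometry.comp
    b.repr.toLinearIsometry).toContinuousLinearMap

theorem shift_apply_basis (b : HilbertBasis ℕ ℂ K) (i : ℕ) : shift b (b i) = b (i + 1) := by
  simp [shift, b.repr_self]

theorem adjoint_shift_mul_shift (b : HilbertBasis ℕ ℂ K) : star (shift b) * shift b = 1 :=
  (ContinuousLinearMap.norm_map_iff_adjoint_comp_self _).1 fun x => LinearIsometry.norm_map _ x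

theorem adjoint_shift_apply_succ (b : HilbertBasis ℕ ℂ K) (i : ℕ) :
    star (shift b) (b (i + 1)) = b i := by
  rw [← shift_apply_basis, ← mul_apply_eq_comp, adjoint_shift_mul_shift, one_apply_eq_self]

theorem adjoint_shift_apply_zero (b : HilbertBasis ℕ ℂ K) : star (shift b) (b 0) = 0 := by
  refine b.repr.injective ?_
  ext j
  simp [b.repr_apply_apply, ContinuousLinearMap.star_eq_adjoint,
    ContinuousLinearMap.adjoint_inner_right, shift_apply_basis, inner_hilbertBasis]

theorem shift_mul_adjoint_shift (b : HilbertBasis ℕ ℂ K) :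
    shift b * star (shift b) = 1 - coordProj b 0 :=
  ext_on_hilbertBasis b fun i => by
    cases i <;> simp [shift_apply_basis, adjoint_shift_apply_succ, adjoint_shift_apply_zero,
      coordProj_apply_basis]

theorem exists_parity_idempotent (b : HilbertBasis ℕ ℂ K) : ∃ e : K →L[ℂ] K, IsIdempotentElem e ∧
    (∀ i, ∃ c : ℂ, e (b i) = c • b i) ∧ e * shift b * e = 0 ∧
    (1 - e) * shift b * (1 - e) = 0 := by
  classical
  obtain ⟨e, he, hee⟩ := exists_diagonal_indicator b Even
  refine ⟨e, hee, fun i => ⟨if Even i then 1 else 0, by rw [he]; split_ifs <;> simp⟩,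
    ext_on_hilbertBasis b fun i => ?_, ext_on_hilbertBasis b fun i => ?_⟩ <;>
  by_cases hi : Even i <;> simp [he, hi, shift_apply_basis, Nat.even_add_one]

namespace IsGeometricDiagonal

variable {b : HilbertBasis ℕ ℂ K} {q a D : K →L[ℂ] K} {Q : ℕ → ℝ}

theorem exists_intertwining (h : IsGeometricDiagonal b q Q)
    (ha : ∀ i j, i < j → (inner ℂ (b i) (a (b j)) : ℂ) = 0) : ∃ Y, (a, Y) ∈ intertwiner q := by
  obtain ⟨Y, hY⟩ := exists_lowerTriangular b (norm_nonneg a) fun i j hij => h.norm_inner_le hij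
  refine ⟨Y, h.mem_intertwiner_iff_inner.2 fun i j => ?_⟩
  rw [hY]
  split_ifs with hji
  · rfl
  · rw [ha i j (not_le.1 hji), mul_zero]

theorem exists_shift_intertwining (h : IsGeometricDiagonal b q Q) :
    ∃ t, (shift b, t) ∈ intertwiner q :=
  h.exists_intertwining fun i j hij => by
    simp [shift_apply_basis, inner_hilbertBasis, (hij.trans j.lt_succ_self).ne]

theorem mul_shift_mul_mem {R : Type*} [Ring R] [Algebra ℂ R] [TopologicalSpace R]
    [IsTopologicalSemiring R] [ContinuousConstSMul ℂ R] {S : Subalgebra ℂ R}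
    (h : IsGeometricDiagonal b q Q) (ρ : (K →L[ℂ] K) × (K →L[ℂ] K) →ₐ[ℂ] R)
    (hρ : ∀ x ∈ intertwiner q, ρ x ∈ S) {t : K →L[ℂ] K} (ht : (shift b, t) ∈ intertwiner q)
    {x y : R} (hx : x ∈ S) (hy : y ∈ S) : x * ρ (shift b, t) * y ∈ idempotentClosure S := by
  obtain ⟨e, hee, hediag, h₁, h₂⟩ := exists_parity_idempotent b
  choose d hd using hediag
  have he : (e, e) ∈ intertwiner q := commute_of_diagonal b h.apply_basis hd
  have he' : 1 - (e, e) ∈ intertwiner q := sub_mem (one_mem _) he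
  have corner {f : (K →L[ℂ] K) × (K →L[ℂ] K)} (hf : f ∈ intertwiner q)
      (h0 : f.1 * shift b * f.1 = 0) : ρ f * ρ (shift b, t) * ρ f = 0 := by
    rw [← map_mul, ← map_mul, h.intertwiner_ext (mul_mem (mul_mem hf ht) hf) (zero_mem _) h0,
      map_zero]
  refine mul_mem_idempotentClosure_of_corners_eq_zero (e := ρ (e, e)) ?_ (hρ _ he) (hρ _ ht) hx hy
    (corner he h₁) ?_
  · rw [IsIdempotentElem, ← map_mul, Prod.mk_mul_mk, hee.eq]
  · rw [← map_one ρ, ← map_sub]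
    exact corner he' h₂

theorem diagonal_mem (h : IsGeometricDiagonal b q Q) {δ : K →L[ℂ] K}
    (hδ : δ ∈ diagonalOperators b) : (δ, δ) ∈ idempotentClosure (intertwiner q) := by
  refine map_mem_idempotentClosure ((AlgHom.id ℂ _).prod (AlgHom.id ℂ (K →L[ℂ] K)))
    (continuous_id.prodMk continuous_id) (S := diagonalOperators b) (fun e he => ?_)
    (isIdempotentGenerated_diagonalOperators b δ hδ)
  choose d hd using he
  exact commute_of_diagonal b h.apply_basis hd

theorem mem_of_strictLower (h : IsGeometricDiagonal b q Q) (hx : (a, D) ∈ intertwiner q)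
    (ha : ∀ i j, i ≤ j → (inner ℂ (b i) (a (b j)) : ℂ) = 0) :
    (a, D) ∈ idempotentClosure (intertwiner q) := by
  obtain ⟨t, ht⟩ := h.exists_shift_intertwining
  obtain ⟨Y, hY⟩ := h.exists_intertwining (a := a * star (shift b)) fun i j hij => by
    cases j with
    | zero => omega
    | succ j => rw [mul_apply_eq_comp, adjoint_shift_apply_succ, ha i j (Nat.lt_succ_iff.1 hij)]
  have hfac : (a, D) = (a * star (shift b), Y) * (shift b, t) :=
    h.intertwiner_ext hx (mul_mem hY ht) <| by
      simp [mul_assoc, adjoint_shift_mul_shift]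
  rw [hfac]
  simpa using h.mul_shift_mul_mem (.id ℂ _) (fun _ hx => hx) ht hY (one_mem _)

theorem star_eq (h : IsGeometricDiagonal b q Q) : star q = q := by
  refine ext_inner_hilbertBasis b fun i j => ?_
  rw [ContinuousLinearMap.star_eq_adjoint, ContinuousLinearMap.adjoint_inner_right,
    h.apply_basis, h.apply_basis, inner_smul_left, inner_smul_right, Complex.conj_ofReal]
  by_cases hij : i = j <;> simp [inner_hilbertBasis, hij]

theorem star_mem_intertwiner (h : IsGeometricDiagonal b q Q) (hx : (a, D) ∈ intertwiner q) :
    (star D, star a) ∈ intertwiner q := by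
  have := congrArg star (mem_intertwiner.1 hx)
  rw [star_mul, star_mul, h.star_eq] at this
  exact this.symm

theorem mem_of_strictUpper (h : IsGeometricDiagonal b q Q) (hx : (a, D) ∈ intertwiner q)
    (hD : ∀ i j, j ≤ i → (inner ℂ (b i) (D (b j)) : ℂ) = 0) :
    (a, D) ∈ idempotentClosure (intertwiner q) := by
  let swap : (K →L[ℂ] K) × (K →L[ℂ] K) →ₐ[ℂ] (K →L[ℂ] K) × (K →L[ℂ] K) :=
    (AlgHom.snd ℂ _ _).prod (AlgHom.fst ℂ _ _)
  have hcont : Continuous swap := continuous_snd.prodMk continuous_fst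
  have hlow : (star D, star a) ∈ idempotentClosure (intertwiner q) :=
    h.mem_of_strictLower (h.star_mem_intertwiner hx) fun i j hij => by
      rw [ContinuousLinearMap.star_eq_adjoint, ContinuousLinearMap.adjoint_inner_right,
        ← inner_conj_symm, hD j i hij, map_zero]
  have hstar := star_mem_idempotentClosure (S' := (intertwiner q).comap swap)
    (fun y hy => (Subalgebra.mem_comap _ swap _).2 (h.star_mem_intertwiner hy)) hlow
  have hswap := map_mem_idempotentClosure (S' := intertwiner q) swap hcont (fun _ hy => hy) hstar
  simpa [swap] using hswap

theorem exists_strictLower (h : IsGeometricDiagonal b q Q) (hx : (a, D) ∈ intertwiner q) :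
    ∃ L : K →L[ℂ] K, ∀ i j,
      (inner ℂ (b i) (L (b j)) : ℂ) = if j < i then inner ℂ (b i) (D (b j)) else 0 := by
  obtain ⟨L, hL⟩ := exists_lowerTriangular b (y := fun i j => if j < i then inner ℂ (b i) (D (b j))
    else 0) (norm_nonneg a) fun i j hij => by
      split_ifs
      · rw [h.mem_intertwiner_iff_inner.1 hx]
        exact h.norm_inner_le hij
      · rw [norm_zero]; positivity
  exact ⟨L, fun i j => by rw [hL]; grind⟩

theorem exists_strictUpper (h : IsGeometricDiagonal b q Q) (hx : (a, D) ∈ intertwiner q) :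
    ∃ U : K →L[ℂ] K, ∀ i j,
      (inner ℂ (b i) (U (b j)) : ℂ) = if i < j then inner ℂ (b i) (a (b j)) else 0 := by
  obtain ⟨L, hL⟩ := h.exists_strictLower (h.star_mem_intertwiner hx)
  refine ⟨star L, fun i j => ?_⟩
  rw [ContinuousLinearMap.star_eq_adjoint, ContinuousLinearMap.adjoint_inner_right,
    ← inner_conj_symm, hL]
  split_ifs
  · rw [ContinuousLinearMap.star_eq_adjoint,
      ContinuousLinearMap.adjoint_inner_right, inner_conj_symm]
  · exact map_zero _

theorem isIdempotentGenerated_intertwiner (h : IsGeometricDiagonal b q Q) :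
    IsIdempotentGenerated (intertwiner q) := by
  rintro ⟨a, D⟩ hx
  obtain ⟨L, hL⟩ := h.exists_strictLower hx
  obtain ⟨U, hU⟩ := h.exists_strictUpper hx
  obtain ⟨δ, hδ, -⟩ := exists_diagonal b (norm_nonneg a) fun i => norm_inner_hilbertBasis_le b a i i
  have hδq : (δ, δ) ∈ intertwiner q := commute_of_diagonal b h.apply_basis hδ
  have hD := h.mem_intertwiner_iff_inner.1 hx
  have hδD (i : ℕ) : δ (b i) = (inner ℂ (b i) (D (b i)) : ℂ) • b i := by
    rw [hδ, hD, div_self (h.ne_zero i), one_mul]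
  have hlow (i j : ℕ) : (inner ℂ (b i) ((a - δ - U) (b j)) : ℂ) =
      if j < i then inner ℂ (b i) (a (b j)) else 0 := by
    rw [sub_apply, inner_sub_right, inner_sub_diagonal b hδ, hU]
    grind
  have hup (i j : ℕ) : (inner ℂ (b i) ((D - δ - L) (b j)) : ℂ) =
      if i < j then inner ℂ (b i) (D (b j)) else 0 := by
    rw [sub_apply, inner_sub_right, inner_sub_diagonal b hδD, hL]
    grind
  have hLmem : (a - δ - U, L) ∈ intertwiner q := h.mem_intertwiner_iff_inner.2 fun i j => by
    rw [hL, hlow]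
    split_ifs
    · exact hD i j
    · rw [mul_zero]
  have hUmem : (U, D - δ - L) ∈ intertwiner q := by
    simpa using sub_mem (sub_mem hx hδq) hLmem
  have hdecomp : (a, D) = (δ, δ) + (a - δ - U, L) + (U, D - δ - L) := by
    ext1 <;> simp only [Prod.fst_add, Prod.snd_add] <;> abel
  rw [hdecomp]
  exact add_mem (add_mem (h.diagonal_mem fun i => ⟨_, hδ i⟩)
    (h.mem_of_strictLower hLmem fun i j hij => by rw [hlow, if_neg hij.not_gt]))
    (h.mem_of_strictUpper hUmem fun i j hij => by rw [hup, if_neg hij.not_gt])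

end IsGeometricDiagonal

end GeometricDiagonal

section Conjugation

variable {V W : Type*} [NormedAddCommGroup V] [NormedSpace ℂ V] [NormedAddCommGroup W]
  [NormedSpace ℂ W]

theorem comp_comp_mem_idempotentClosure {S : Subalgebra ℂ (V →L[ℂ] V)}
    {S' : Subalgebra ℂ (W →L[ℂ] W)} {i : V →L[ℂ] W} {p : W →L[ℂ] V}
    (hpi : ∀ v, p (i v) = v) (hS : ∀ x ∈ S, i ∘L x ∘L p ∈ S') {x : V →L[ℂ] V}
    (hx : x ∈ idempotentClosure S) : i ∘L x ∘L p ∈ idempotentClosure S' := by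
  let conj : (V →L[ℂ] V) →ₙₐ[ℂ] (W →L[ℂ] W) :=
    { toFun := fun x => i ∘L x ∘L p
      map_zero' := by ext; simp
      map_add' := fun x y => by ext; simp
      map_smul' := fun c x => by ext; simp
      map_mul' := fun x y => by ext; simp [hpi] }
  have hcont : Continuous conj :=
    continuous_const.clm_comp (continuous_id.clm_comp continuous_const)
  exact map_mem_idempotentClosure conj hcont hS hx

end Conjugation

section GraphAlgebra

variable {E : Type*} [NormedAddCommGroup E] [NormedSpace ℂ E]

/-- The algebra `Alg {0, M, N, E}` of the operators that leave both `M` and `N` invariant. -/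
def twoAtomAlg (M N : Submodule ℂ E) : Subalgebra ℂ (E →L[ℂ] E) where
  carrier := {T | (∀ x ∈ M, T x ∈ M) ∧ ∀ x ∈ N, T x ∈ N}
  mul_mem' := fun hS hT => ⟨fun x hx => hS.1 _ (hT.1 x hx), fun x hx => hS.2 _ (hT.2 x hx)⟩
  add_mem' := fun hS hT =>
    ⟨fun x hx => add_mem (hS.1 x hx) (hT.1 x hx), fun x hx => add_mem (hS.2 x hx) (hT.2 x hx)⟩
  algebraMap_mem' := fun c => ⟨fun _ hx => M.smul_mem c hx, fun _ hx => N.smul_mem c hx⟩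

/-- The model for two atoms in generic position: the operators on `E × E` that leave both
`E × 0` and the graph of `q` invariant. -/
noncomputable def graphAlg (q : E →L[ℂ] E) : Subalgebra ℂ (E × E →L[ℂ] E × E) :=
  twoAtomAlg ((⊤ : Submodule ℂ E).prod ⊥) (q : E →ₗ[ℂ] E).graph

theorem mem_graphAlg {q : E →L[ℂ] E} {T : E × E →L[ℂ] E × E} : T ∈ graphAlg q ↔
    (∀ x, (T (x, 0)).2 = 0) ∧ ∀ x, (T (x, q x)).2 = q (T (x, q x)).1 := by
  refine and_congr ⟨fun h x => (h (x, 0) (by simp)).2, fun h x hx => ?_⟩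
    ⟨fun h x => h (x, q x) rfl, fun h x hx => ?_⟩
  · obtain ⟨x, y⟩ := x
    obtain rfl : y = 0 := hx.2
    exact ⟨trivial, h x⟩
  · obtain ⟨x, y⟩ := x
    obtain rfl : y = q x := hx
    exact h x

/-- The operator on `E × E` with block matrix `!![a, B; 0, D]`. -/
noncomputable def upperTriangular (a B D : E →L[ℂ] E) : E × E →L[ℂ] E × E :=
  (a.coprod B).prod (D ∘L .snd ℂ E E)

variable {q a B D a' B' D' : E →L[ℂ] E}

theorem upperTriangular_apply (x : E × E) :
    upperTriangular a B D x = (a x.1 + B x.2, D x.2) := rfl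

theorem upperTriangular_mul : upperTriangular a B D * upperTriangular a' B' D' =
    upperTriangular (a * a') (a * B' + B * D') (D * D') := by
  refine ContinuousLinearMap.ext fun x => ?_
  simp [upperTriangular_apply, add_assoc]

theorem upperTriangular_add : upperTriangular a B D + upperTriangular a' B' D' =
    upperTriangular (a + a') (B + B') (D + D') := by
  refine ContinuousLinearMap.ext fun x => ?_
  simp [upperTriangular_apply, add_add_add_comm]

theorem upperTriangular_smul (c : ℂ) :
    c • upperTriangular a B D = upperTriangular (c • a) (c • B) (c • D) := by
  refine ContinuousLinearMap.ext fun x => ?_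
  simp [upperTriangular_apply]

theorem upperTriangular_mem_graphAlg :
    upperTriangular a B D ∈ graphAlg q ↔ D * q = q * a + q * B * q := by
  simp [mem_graphAlg, upperTriangular_apply, ContinuousLinearMap.ext_iff]

theorem exists_eq_upperTriangular {T : E × E →L[ℂ] E × E} (hT : T ∈ graphAlg q) :
    ∃ a B D, T = upperTriangular a B D ∧ D * q = q * a + q * B * q := by
  have h : T = upperTriangular (.fst ℂ E E ∘L T ∘L .inl ℂ E E) (.fst ℂ E E ∘L T ∘L .inr ℂ E E)
      (.snd ℂ E E ∘L T ∘L .inr ℂ E E) := by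
    refine ContinuousLinearMap.ext fun ⟨x, y⟩ => ?_
    have hxy : T (x, y) = T (x, 0) + T (0, y) := by rw [← map_add]; simp
    ext
    · simp [upperTriangular_apply, hxy]
    · simp [upperTriangular_apply, hxy, (mem_graphAlg.1 hT).1 x]
  exact ⟨_, _, _, h, upperTriangular_mem_graphAlg.1 (h ▸ hT)⟩

/-- The algebra homomorphism sending `(a, D)` to the block diagonal operator `a × D`. -/
noncomputable def blockDiagonal (E : Type*) [NormedAddCommGroup E] [NormedSpace ℂ E] :
    (E →L[ℂ] E) × (E →L[ℂ] E) →ₐ[ℂ] (E × E →L[ℂ] E × E) :=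
  .ofLinearMap (ContinuousLinearMap.prodMapL ℂ E E E E).toLinearMap rfl fun _ _ => rfl

theorem blockDiagonal_apply : blockDiagonal E (a, D) = upperTriangular a 0 D := by
  refine ContinuousLinearMap.ext fun x => ?_
  exact Prod.ext (add_zero (a x.1)).symm rfl

theorem continuous_blockDiagonal : Continuous (blockDiagonal E) :=
  (ContinuousLinearMap.prodMapL ℂ E E E E).continuous

theorem blockDiagonal_mul_upperTriangular :
    blockDiagonal E (a, D) * upperTriangular a' B' D' =
      upperTriangular (a * a') (a * B') (D * D') := by
  simp [blockDiagonal_apply, upperTriangular_mul]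

theorem blockDiagonal_mem_graphAlg :
    blockDiagonal E (a, D) ∈ graphAlg q ↔ (a, D) ∈ intertwiner q := by
  simp [blockDiagonal_apply, upperTriangular_mem_graphAlg, mem_intertwiner]

theorem blockDiagonal_mem_idempotentClosure (h : (a, D) ∈ idempotentClosure (intertwiner q)) :
    blockDiagonal E (a, D) ∈ idempotentClosure (graphAlg q) :=
  map_mem_idempotentClosure (blockDiagonal E) continuous_blockDiagonal
    (fun _ hx => blockDiagonal_mem_graphAlg.2 hx) h

end GraphAlgebra

section DiagonalGraphAlgebra

set_option maxSynthPendingDepth 3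

variable {K Ω : Type*} [NormedAddCommGroup K] [InnerProductSpace ℂ K] {q : K →L[ℂ] K} {d : Ω → ℂ}

/-- The block diagonal operator with both diagonal entries equal to a coordinate projection. -/
noncomputable def coordBlock (b : HilbertBasis Ω ℂ K) (i : Ω) : K × K →L[ℂ] K × K :=
  blockDiagonal K (coordProj b i, coordProj b i)

theorem isIdempotentElem_coordBlock (b : HilbertBasis Ω ℂ K) (i : Ω) :
    IsIdempotentElem (coordBlock b i) :=
  IsIdempotentElem.map (e := (coordProj b i, coordProj b i))
    (Prod.ext (isIdempotentElem_coordProj b i) (isIdempotentElem_coordProj b i)) (blockDiagonal K)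

theorem coordBlock_mem_graphAlg (b : HilbertBasis Ω ℂ K) (hq : ∀ i, q (b i) = d i • b i) (i : Ω) :
    coordBlock b i ∈ graphAlg q :=
  blockDiagonal_mem_graphAlg.2 <| mem_intertwiner.2 <|
    (coordProj_mul_of_diagonal b hq i).trans (mul_coordProj_of_diagonal b hq i).symm

/-- In the plane spanned by `(b i, 0)` and `(0, b i)` the two lines have eigenprojections
`!![1, -d⁻¹; 0, 0]` and `!![0, d⁻¹; 0, 1]`. -/
theorem eigenprojections_mem_idempotentClosure (b : HilbertBasis Ω ℂ K)
    (hq : ∀ i, q (b i) = d i • b i) {i : Ω} (hd : d i ≠ 0) :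
    upperTriangular (coordProj b i) (-((d i)⁻¹ • coordProj b i)) 0
        ∈ idempotentClosure (graphAlg q) ∧
      upperTriangular 0 ((d i)⁻¹ • coordProj b i) (coordProj b i)
        ∈ idempotentClosure (graphAlg q) := by
  have hPq := coordProj_mul_of_diagonal b hq i
  have hqP := mul_coordProj_of_diagonal b hq i
  have hPP := (isIdempotentElem_coordProj b i).eq
  constructor <;>
    refine mem_idempotentClosure_of_isIdempotentElem ?_ (upperTriangular_mem_graphAlg.2 ?_)
  · simp only [IsIdempotentElem, upperTriangular_mul, hPP, mul_neg, mul_smul_comm, mul_zero,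
      add_zero]
  · simp only [zero_mul, mul_neg, neg_mul, mul_smul_comm, hqP, hPq, smul_smul,
      inv_mul_cancel₀ hd, one_smul, add_neg_cancel]
  · simp only [IsIdempotentElem, upperTriangular_mul, hPP, smul_mul_assoc, zero_mul, mul_zero,
      zero_add]
  · simp only [mul_zero, zero_add, mul_smul_comm, hqP, hPq, smul_smul,
      inv_mul_cancel₀ hd, one_smul]

theorem coordBlock_mul_mul_mem (b : HilbertBasis Ω ℂ K) (hq : ∀ i, q (b i) = d i • b i) {i : Ω}
    (hd : d i ≠ 0) {T : K × K →L[ℂ] K × K} (hT : T ∈ graphAlg q) :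
    coordBlock b i * T * coordBlock b i ∈ idempotentClosure (graphAlg q) := by
  obtain ⟨a, B, D, rfl, h⟩ := exists_eq_upperTriangular hT
  have hrel : (inner ℂ (b i) (D (b i)) : ℂ)
      = inner ℂ (b i) (a (b i)) + d i * inner ℂ (b i) (B (b i)) := by
    have h' := congrArg (fun T : K →L[ℂ] K => (inner ℂ (b i) (T (b i)) : ℂ)) h
    simp only [mul_apply_eq_comp, hq, map_smul, inner_smul_right, add_apply, inner_add_right,
      inner_apply_of_diagonal b hq] at h'
    exact mul_left_cancel₀ hd (by rw [h']; ring)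
  have hB : (inner ℂ (b i) (B (b i)) : ℂ) =
      -(inner ℂ (b i) (a (b i)) * (d i)⁻¹) + inner ℂ (b i) (D (b i)) * (d i)⁻¹ := by
    rw [hrel]; field_simp; ring
  have hsum : coordBlock b i * upperTriangular a B D * coordBlock b i =
      (inner ℂ (b i) (a (b i)) : ℂ) •
          upperTriangular (coordProj b i) (-((d i)⁻¹ • coordProj b i)) 0 +
        (inner ℂ (b i) (D (b i)) : ℂ) •
          upperTriangular 0 ((d i)⁻¹ • coordProj b i) (coordProj b i) := by
    simp only [coordBlock, blockDiagonal_apply, upperTriangular_mul, zero_mul, mul_zero, zero_add,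
      coordProj_mul_mul b i, upperTriangular_smul, upperTriangular_add, smul_zero, add_zero,
      smul_neg, smul_smul, hB, add_smul, neg_smul]
  obtain ⟨hleft, hright⟩ := eigenprojections_mem_idempotentClosure b hq hd
  rw [hsum]
  exact add_mem (SMulMemClass.smul_mem _ hleft) (SMulMemClass.smul_mem _ hright)

theorem coordBlock_mul_mem (b : HilbertBasis Ω ℂ K) (hq : ∀ i, q (b i) = d i • b i) {i : Ω}
    (hd : d i ≠ 0) {T : K × K →L[ℂ] K × K} (hT : T ∈ graphAlg q) :
    coordBlock b i * T ∈ idempotentClosure (graphAlg q) := by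
  have h := add_mem (coordBlock_mul_mul_mem b hq hd hT) (mul_mul_one_sub_mem_idempotentClosure
    (isIdempotentElem_coordBlock b i) (coordBlock_mem_graphAlg b hq i) hT)
  rwa [← mul_add, add_sub_cancel, mul_one] at h

theorem isIdempotentGenerated_graphAlg_of_finite [Finite Ω] (b : HilbertBasis Ω ℂ K)
    (hq : ∀ i, q (b i) = d i • b i) (hd : ∀ i, d i ≠ 0) : IsIdempotentGenerated (graphAlg q) := by
  intro T hT
  have := Fintype.ofFinite Ω
  refine mem_idempotentClosure_of_corners (s := Finset.univ) (f := coordBlock b)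
    (fun i _ => isIdempotentElem_coordBlock b i) (fun i _ => coordBlock_mem_graphAlg b hq i) ?_ hT
    fun i _ => coordBlock_mul_mul_mem b hq (hd i) hT
  classical
  have hone : ∑ i, coordProj b i = 1 :=
    ext_on_hilbertBasis b fun j => by simp [sum_apply, coordProj_apply_basis]
  have hsum : ∑ i, (coordProj b i, coordProj b i) = 1 :=
    Prod.ext (by rw [Prod.fst_sum, hone, Prod.fst_one]) (by rw [Prod.snd_sum, hone, Prod.snd_one])
  simp only [coordBlock, ← map_sum, hsum, map_one]

end DiagonalGraphAlgebra

section DyadicDiagonal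

set_option maxSynthPendingDepth 3

variable {K : Type*} [NormedAddCommGroup K] [InnerProductSpace ℂ K] [CompleteSpace K]
  {q : K →L[ℂ] K}

-- With `s` the shift and `t * q = q * s`, split off the first row and factor the rest through
-- `s × t`, using `s * star s = 1 - coordProj b 0`.
theorem IsGeometricDiagonal.upperTriangular_zero_mem {b : HilbertBasis ℕ ℂ K} {Q : ℕ → ℝ}
    (h : IsGeometricDiagonal b q Q) (B : K →L[ℂ] K) :
    upperTriangular 0 B (q * B) ∈ idempotentClosure (graphAlg q) := by
  obtain ⟨t, ht⟩ := h.exists_shift_intertwining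
  have hmem (B : K →L[ℂ] K) : upperTriangular 0 B (q * B) ∈ graphAlg q :=
    upperTriangular_mem_graphAlg.2 (by rw [mul_zero, zero_add])
  have hrow := coordBlock_mul_mem b h.apply_basis (h.ne_zero 0) (hmem B)
  have hrest := h.mul_shift_mul_mem (blockDiagonal K) (fun _ => blockDiagonal_mem_graphAlg.2) ht
    (one_mem (graphAlg q)) (hmem (star (shift b) * B))
  convert add_mem hrow hrest using 1
  have hP : coordProj b 0 = 1 - shift b * star (shift b) := by
    rw [shift_mul_adjoint_shift, sub_sub_cancel]
  have hPq : coordProj b 0 * q = q * coordProj b 0 :=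
    (coordProj_mul_of_diagonal b h.apply_basis 0).trans
      (mul_coordProj_of_diagonal b h.apply_basis 0).symm
  have htq : t * (q * (star (shift b) * B)) = q * (shift b * star (shift b)) * B := by
    rw [← mul_assoc, mem_intertwiner.1 ht]
    noncomm_ring
  rw [one_mul, coordBlock, blockDiagonal_mul_upperTriangular, blockDiagonal_mul_upperTriangular,
    upperTriangular_add, htq, ← mul_assoc (coordProj b 0) q B, hPq, hP]
  congr 1 <;> noncomm_ring

theorem IsGeometricDiagonal.isIdempotentGenerated_graphAlg {b : HilbertBasis ℕ ℂ K} {Q : ℕ → ℝ}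
    (h : IsGeometricDiagonal b q Q) : IsIdempotentGenerated (graphAlg q) := by
  intro T hT
  obtain ⟨a, B, D, rfl, hD⟩ := exists_eq_upperTriangular hT
  have hdiag : blockDiagonal K (a, D - q * B) ∈ idempotentClosure (graphAlg q) :=
    blockDiagonal_mem_idempotentClosure <| h.isIdempotentGenerated_intertwiner _ <|
      mem_intertwiner.2 (by rw [sub_mul, hD, add_sub_cancel_right])
  convert add_mem hdiag (h.upperTriangular_zero_mem B) using 1
  rw [blockDiagonal_apply, upperTriangular_add, add_zero, zero_add, sub_add_cancel]

theorem exists_hilbertBasis_reindex {Ω Ω' : Type*} (b : HilbertBasis Ω ℂ K) (e : Ω' ≃ Ω) :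
    ∃ c : HilbertBasis Ω' ℂ K, ∀ i, c i = b (e i) := by
  refine ⟨.mk (b.orthonormal.comp e e.injective) ?_, fun i => by rw [HilbertBasis.coe_mk]; rfl⟩
  rw [e.surjective.range_comp b, b.dense_span]

theorem isIdempotentGenerated_graphAlg_of_injective {Ω : Type*} (b : HilbertBasis Ω ℂ K)
    {k : Ω → ℕ} (hk : Function.Injective k)
    (hq : ∀ i, q (b i) = (((1 / 2 : ℝ) ^ k i : ℝ) : ℂ) • b i) :
    IsIdempotentGenerated (graphAlg q) := by
  classical
  rcases finite_or_infinite Ω with _ | _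
  · exact isIdempotentGenerated_graphAlg_of_finite b hq fun i => by simp
  have := (Set.infinite_range_of_injective hk).to_subtype
  let o := Nat.Subtype.orderIsoOfNat (Set.range k)
  let e : ℕ ≃ Ω := o.toEquiv.trans (Equiv.ofInjective k hk).symm
  have hke (i : ℕ) : k (e i) = o i := Equiv.apply_ofInjective_symm hk (o i)
  obtain ⟨c, hc⟩ := exists_hilbertBasis_reindex b e
  refine IsGeometricDiagonal.isIdempotentGenerated_graphAlg (b := c)
    (Q := fun i => (1 / 2 : ℝ) ^ (o i : ℕ)) ⟨fun i => ?_, fun i => by positivity, fun i => ?_⟩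
  · rw [hc, hq, hke]
  · have hlt : (o i : ℕ) + 1 ≤ o (i + 1) := o.strictMono i.lt_succ_self
    calc (1 / 2 : ℝ) ^ (o (i + 1) : ℕ) ≤ (1 / 2 : ℝ) ^ ((o i : ℕ) + 1) :=
          pow_le_pow_of_le_one (by norm_num) (by norm_num) hlt
      _ = (1 / 2 : ℝ) ^ (o i : ℕ) / 2 := by rw [pow_succ, mul_one_div]

theorem exists_subbasis_compression {Ω : Type*} (b : HilbertBasis Ω ℂ K) (Λ : Set Ω) :
    ∃ (c : HilbertBasis Λ ℂ (lp (fun _ : Λ => ℂ) 2)) (i : lp (fun _ : Λ => ℂ) 2 →L[ℂ] K)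
      (p : K →L[ℂ] lp (fun _ : Λ => ℂ) 2), (∀ l, i (c l) = b l) ∧ (∀ l : Λ, p (b l) = c l) ∧
        ∀ ω ∉ Λ, p (b ω) = 0 := by
  classical
  have hΛ := (b.orthonormal.comp _ (Subtype.val_injective (p := (· ∈ Λ)))).orthogonalFamily
  let i : lp (fun _ : Λ => ℂ) 2 →L[ℂ] K := hΛ.linearIsometry.toContinuousLinearMap
  let c : HilbertBasis Λ ℂ (lp (fun _ : Λ => ℂ) 2) := .ofRepr (.refl ℂ _)
  have hc (l : Λ) : c l = lp.single 2 l (1 : ℂ) := c.repr_self l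
  have hi (l : Λ) : i (c l) = b l := by
    rw [hc]
    exact (hΛ.linearIsometry_apply_single _).trans (one_smul ℂ _)
  have hp (l : Λ) (ω : Ω) : c.repr (i.adjoint (b ω)) l = if (l : Ω) = ω then (1 : ℂ) else 0 := by
    rw [c.repr_apply_apply, ContinuousLinearMap.adjoint_inner_right, hi, inner_hilbertBasis]
  refine ⟨c, i, i.adjoint, hi, fun l => c.repr.injective ?_, fun ω hω => c.repr.injective ?_⟩ <;>
    ext l'
  · rw [hp, c.repr_apply_apply, inner_hilbertBasis]
    simp only [Subtype.val_inj]
  · rw [hp, if_neg (by rintro rfl; exact hω l'.2), map_zero]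
    rfl

theorem prodMap_comp_prodMap_mem_graphAlg {V W : Type*} [NormedAddCommGroup V] [NormedSpace ℂ V]
    [NormedAddCommGroup W] [NormedSpace ℂ W] {qV : V →L[ℂ] V} {qW : W →L[ℂ] W} {i : V →L[ℂ] W}
    {p : W →L[ℂ] V} (hi : ∀ v, i (qV v) = qW (i v)) (hp : ∀ w, p (qW w) = qV (p w))
    {x : V × V →L[ℂ] V × V} (hx : x ∈ graphAlg qV) :
    i.prodMap i ∘L x ∘L p.prodMap p ∈ graphAlg qW := by
  obtain ⟨h₁, h₂⟩ := mem_graphAlg.1 hx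
  exact mem_graphAlg.2 ⟨fun w => by simp [h₁], fun w => by simp [hp, h₂, hi]⟩

theorem exists_diagonal_restriction {Ω : Type*} (b : HilbertBasis Ω ℂ K) {d : Ω → ℂ}
    (hq : ∀ ω, q (b ω) = d ω • b ω) (Λ : Set Ω) :
    ∃ (c : HilbertBasis Λ ℂ (lp (fun _ : Λ => ℂ) 2)) (i : lp (fun _ : Λ => ℂ) 2 →L[ℂ] K)
      (p : K →L[ℂ] lp (fun _ : Λ => ℂ) 2)
      (qΛ : lp (fun _ : Λ => ℂ) 2 →L[ℂ] lp (fun _ : Λ => ℂ) 2),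
      (∀ l, qΛ (c l) = d l • c l) ∧ (∀ v, p (i v) = v) ∧ (∀ ω ∈ Λ, i (p (b ω)) = b ω) ∧
        (∀ ω ∉ Λ, i (p (b ω)) = 0) ∧ (∀ v, i (qΛ v) = q (i v)) ∧ ∀ x, p (q x) = qΛ (p x) := by
  obtain ⟨c, i, p, hi, hp, hp₀⟩ := exists_subbasis_compression b Λ
  have hd (ω : Ω) : ‖d ω‖ ≤ ‖q‖ := by
    simpa [hq, norm_smul, b.orthonormal.1 ω] using q.le_opNorm (b ω)
  obtain ⟨qΛ, hqΛ, -⟩ := exists_diagonal c (norm_nonneg q) fun l => hd l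
  have hpi : p ∘L i = .id ℂ _ := ext_on_hilbertBasis c fun l => by simp [hi, hp]
  have hiq : i ∘L qΛ = q ∘L i := ext_on_hilbertBasis c fun l => by simp [hqΛ, hi, hq]
  have hpq : p ∘L q = qΛ ∘L p := ext_on_hilbertBasis b fun ω => by
    by_cases hω : ω ∈ Λ
    · simp [hp ⟨ω, hω⟩, hq, hqΛ]
    · simp [hp₀ ω hω, hq]
  exact ⟨c, i, p, qΛ, hqΛ, DFunLike.congr_fun hpi,
    fun ω hω => (congrArg i (hp ⟨ω, hω⟩)).trans (hi _),
    fun ω hω => (congrArg i (hp₀ ω hω)).trans i.map_zero,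
    DFunLike.congr_fun hiq, DFunLike.congr_fun hpq⟩

theorem isIdempotentGenerated_graphAlg_of_dyadic {Ω : Type*} (b : HilbertBasis Ω ℂ K) (k : Ω → ℕ)
    (hq : ∀ i, q (b i) = (((1 / 2 : ℝ) ^ k i : ℝ) : ℂ) • b i) :
    IsIdempotentGenerated (graphAlg q) := by
  intro T hT
  obtain ⟨w, w', Λ, hΛ, hww, hww', hf, hcomm⟩ := exists_halving_operators b k
  obtain ⟨hwq, hw'q⟩ := hcomm q (fun n => (((1 / 2 : ℝ) ^ n : ℝ) : ℂ)) hq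
  refine mem_idempotentClosure_of_halving (w := blockDiagonal K (w, w))
    (w' := blockDiagonal K (w', w')) (blockDiagonal_mem_graphAlg.2 hwq)
    (blockDiagonal_mem_graphAlg.2 hw'q) hT ?_ ?_ ?_
  · rw [← map_mul, Prod.mk_mul_mk, hww, Prod.mk_zero_zero, map_zero]
  · rw [← map_mul, ← map_mul, Prod.mk_mul_mk, Prod.mk_mul_mk, hww']
  obtain ⟨c, i, p, qΛ, hqΛ, hpi, hip, hip₀, hiq, hpq⟩ := exists_diagonal_restriction b hq Λ
  have hqΛ_gen : IsIdempotentGenerated (graphAlg qΛ) :=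
    isIdempotentGenerated_graphAlg_of_injective c (fun l m h => Subtype.ext (hΛ l.2 m.2 h)) hqΛ
  have hcorner := comp_comp_mem_idempotentClosure (i := i.prodMap i) (p := p.prodMap p)
    (fun v => Prod.ext (hpi v.1) (hpi v.2)) (fun _ => prodMap_comp_prodMap_mem_graphAlg hiq hpq)
    (hqΛ_gen _ (prodMap_comp_prodMap_mem_graphAlg hpq hiq hT))
  have hproj : i ∘L p = 1 - (w * w' + w' * w) := ext_on_hilbertBasis b fun ω => by
    rw [hf]
    split_ifs with hω
    exacts [hip ω hω, hip₀ ω hω]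
  have hblock : 1 - (blockDiagonal K (w, w) * blockDiagonal K (w', w') +
      blockDiagonal K (w', w') * blockDiagonal K (w, w)) = i.prodMap i ∘L p.prodMap p := by
    rw [← map_mul, ← map_mul, ← map_add, ← map_one (blockDiagonal K), ← map_sub,
      Prod.mk_mul_mk, Prod.mk_mul_mk, Prod.mk_add_mk, Prod.one_eq_mk, Prod.mk_sub_mk, ← hproj]
    rfl
  rw [hblock]
  exact hcorner

end DyadicDiagonal

section SpectralSubspace

variable {V W : Type*} [NormedAddCommGroup V] [InnerProductSpace ℂ V] [CompleteSpace V]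
  [NormedAddCommGroup W] [InnerProductSpace ℂ W] [CompleteSpace W]

theorem isSelfAdjoint_gram (G : V →L[ℂ] W) : IsSelfAdjoint (G.adjoint ∘L G) :=
  (ContinuousLinearMap.isPositive_adjoint_comp_self G).isSelfAdjoint

/-- The positive part `(G†G - l)⁺` of the shifted Gram operator of `G`. -/
noncomputable def gramExcess (G : V →L[ℂ] W) (l : ℝ) : V →L[ℂ] V :=
  cfc (fun t : ℝ => max (t - l) 0) (G.adjoint ∘L G)

/-- The spectral subspace of `G†G` for the interval `[0, l]`, realised as the kernel of the
continuous function `(G†G - l)⁺`. -/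
noncomputable def spectralSubspace (G : V →L[ℂ] W) (l : ℝ) : Submodule ℂ V :=
  LinearMap.ker (gramExcess G l : V →ₗ[ℂ] V)

variable {G : V →L[ℂ] W} {l m : ℝ} {x y : V}

theorem mem_spectralSubspace : x ∈ spectralSubspace G l ↔ gramExcess G l x = 0 := Iff.rfl

instance : CompleteSpace (spectralSubspace G l) :=
  (gramExcess G l).isClosed_ker.completeSpace_coe

theorem spectralSubspace_eq_top (h : ‖G‖ ^ 2 ≤ l) : spectralSubspace G l = ⊤ := by
  have hgram : G.adjoint ∘L G ≤ algebraMap ℝ _ l :=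
    (isSelfAdjoint_gram G).le_algebraMap_norm_self.trans <| algebraMap_mono _ <| by
      rwa [ContinuousLinearMap.norm_adjoint_comp_self, ← sq]
  have hzero : gramExcess G l = 0 := by
    rw [gramExcess, ← cfc_zero ℝ (G.adjoint ∘L G)]
    exact cfc_congr fun t ht => max_eq_right <| sub_nonpos.2 <|
      (le_algebraMap_iff_spectrum_le (isSelfAdjoint_gram G)).1 hgram t ht
  rw [spectralSubspace, hzero]
  exact LinearMap.ker_zero

theorem spectralSubspace_mono : Monotone (spectralSubspace G) := by
  refine monotone_iff_forall_lt.2 fun m l hml x hx => ?_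
  have hpos (t : ℝ) : max (t - m) (l - m) ≠ 0 := (lt_max_of_lt_right (sub_pos.2 hml)).ne'
  have hfactor : gramExcess G l =
      cfc (fun t : ℝ => max (t - l) 0 / max (t - m) (l - m)) (G.adjoint ∘L G) * gramExcess G m := by
    rw [gramExcess, gramExcess, ← cfc_mul _ _ _
      (Continuous.continuousOn (by fun_prop (disch := exact hpos _))) (by fun_prop)]
    refine congrArg (cfc · _) (funext fun t => ?_)
    rcases le_total t l with h | h
    · simp [h]
    · rw [max_eq_left (a := t - m) (b := l - m) (by linarith),
        max_eq_left (a := t - m) (b := 0) (by linarith), div_mul_cancel₀]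
      linarith
  rw [mem_spectralSubspace, hfactor, mul_apply_eq_comp, mem_spectralSubspace.1 hx, map_zero]

theorem exists_nonneg_gram_eq (G : V →L[ℂ] W) (l : ℝ) : ∃ r : V →L[ℂ] V, 0 ≤ r ∧
    gramExcess G l * r = 0 ∧ ∀ x,
      ‖G x‖ ^ 2 =
        l * ‖x‖ ^ 2 + (inner ℂ x (gramExcess G l x) : ℂ).re - (inner ℂ x (r x) : ℂ).re := by
  have hg := isSelfAdjoint_gram G
  refine ⟨cfc (fun t : ℝ => max (l - t) 0) (G.adjoint ∘L G),
    cfc_nonneg fun t _ => le_max_right _ _, ?_, fun x => ?_⟩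
  · rw [gramExcess, ← cfc_mul _ _ _ (by fun_prop) (by fun_prop), ← cfc_zero ℝ (G.adjoint ∘L G)]
    refine congrArg (cfc · _) (funext fun t => ?_)
    rcases le_total t l with h | h <;> simp [h]
  · have hone : (l : ℂ) • (1 : V →L[ℂ] V) = cfc (fun _ : ℝ => l) (G.adjoint ∘L G) := by
      rw [cfc_const l _, Algebra.algebraMap_eq_smul_one]
      rfl
    have hgram : G.adjoint ∘L G = (l : ℂ) • (1 : V →L[ℂ] V) + gramExcess G l -
        cfc (fun t : ℝ => max (l - t) 0) (G.adjoint ∘L G) := by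
      rw [hone, gramExcess, ← cfc_add _ _ _ (by fun_prop) (by fun_prop),
        ← cfc_sub _ _ _ (by fun_prop) (by fun_prop)]
      nth_rw 1 [← cfc_id ℝ (G.adjoint ∘L G)]
      refine congrArg (cfc · _) (funext fun t => ?_)
      rcases le_total t l with h | h <;> simp [h]
    have hnorm : ‖G x‖ ^ 2 = (inner ℂ x ((G.adjoint ∘L G) x) : ℂ).re :=
      (ContinuousLinearMap.apply_norm_sq_eq_inner_adjoint_right G x)
    have hinner := congrArg (fun T : V →L[ℂ] V => (inner ℂ x (T x) : ℂ).re) hgram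
    simp only [sub_apply, add_apply, smul_apply, one_apply_eq_self, inner_sub_right,
      inner_add_right, inner_smul_right, inner_self_eq_norm_sq_to_K, Complex.sub_re,
      Complex.add_re] at hinner
    rw [hnorm, hinner]
    congr 2
    norm_cast
    exact Complex.re_ofReal_mul _ _

theorem gramExcess_nonneg : 0 ≤ gramExcess G l := cfc_nonneg fun _ _ => le_max_right _ _

theorem norm_sq_le_of_mem_spectralSubspace (hx : x ∈ spectralSubspace G l) :
    ‖G x‖ ^ 2 ≤ l * ‖x‖ ^ 2 := by
  obtain ⟨r, hr, -, h⟩ := exists_nonneg_gram_eq G l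
  have hrx : 0 ≤ (inner ℂ x (r x) : ℂ).re :=
    ((ContinuousLinearMap.nonneg_iff_isPositive r).1 hr).re_inner_nonneg_right x
  rw [h, mem_spectralSubspace.1 hx, inner_zero_right, Complex.zero_re]
  linarith

theorem le_norm_sq_of_mem_orthogonal_spectralSubspace (hx : x ∈ (spectralSubspace G l)ᗮ) :
    l * ‖x‖ ^ 2 ≤ ‖G x‖ ^ 2 := by
  obtain ⟨r, hr, hhr, h⟩ := exists_nonneg_gram_eq G l
  have hrx : r x = 0 := by
    refine ext_inner_left ℂ fun w => ?_
    rw [inner_zero_right, ← ContinuousLinearMap.adjoint_inner_left,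
      ContinuousLinearMap.isSelfAdjoint_iff'.1 (IsSelfAdjoint.of_nonneg hr)]
    exact hx _ (DFunLike.congr_fun hhr w)
  have hpos : 0 ≤ (inner ℂ x (gramExcess G l x) : ℂ).re :=
    ((ContinuousLinearMap.nonneg_iff_isPositive _).1 gramExcess_nonneg).re_inner_nonneg_right x
  rw [h, hrx, inner_zero_right, Complex.zero_re]
  linarith

theorem inner_map_eq_zero_of_mem_spectralSubspace (hx : x ∈ spectralSubspace G l)
    (hy : y ∈ (spectralSubspace G l)ᗮ) : (inner ℂ (G x) (G y) : ℂ) = 0 := by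
  have hcomm : Commute (G.adjoint ∘L G) (gramExcess G l) := by
    have := cfc_commute_cfc (fun t : ℝ => t) (fun t : ℝ => max (t - l) 0) (G.adjoint ∘L G)
    rwa [cfc_id' ℝ _ (isSelfAdjoint_gram G)] at this
  have hgx : (G.adjoint ∘L G) x ∈ spectralSubspace G l := by
    have := DFunLike.congr_fun hcomm.eq x
    rw [mul_apply_eq_comp, mul_apply_eq_comp, mem_spectralSubspace.1 hx, map_zero] at this
    exact this.symm
  rw [← ContinuousLinearMap.adjoint_inner_left]
  exact hy _ hgx

/-- The spectral subspace of `|G| = (G†G)^(1/2)` for the dyadic interval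
`[(1/2)^(k+1), (1/2)^k]`. -/
noncomputable def dyadicBlock (G : V →L[ℂ] W) (k : ℕ) : Submodule ℂ V :=
  spectralSubspace G ((1 / 4) ^ k) ⊓ (spectralSubspace G ((1 / 4) ^ (k + 1)))ᗮ

variable {j k : ℕ}

instance : CompleteSpace (dyadicBlock G k) :=
  ((gramExcess G _).isClosed_ker.inter (Submodule.isClosed_orthogonal _)).completeSpace_coe

theorem norm_map_le_of_mem_spectralSubspace (hx : x ∈ spectralSubspace G ((1 / 4) ^ k)) :
    ‖G x‖ ≤ (1 / 2) ^ k * ‖x‖ := by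
  refine le_of_sq_le_sq ((norm_sq_le_of_mem_spectralSubspace hx).trans_eq ?_) (by positivity)
  rw [mul_pow, ← pow_mul, mul_comm k, pow_mul]
  norm_num

theorem le_norm_map_of_mem_orthogonal_spectralSubspace
    (hx : x ∈ (spectralSubspace G ((1 / 4) ^ k))ᗮ) : (1 / 2) ^ k * ‖x‖ ≤ ‖G x‖ := by
  refine le_of_sq_le_sq (le_of_eq_of_le ?_ (le_norm_sq_of_mem_orthogonal_spectralSubspace hx))
    (norm_nonneg _)
  rw [mul_pow, ← pow_mul, mul_comm k, pow_mul]
  norm_num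

theorem spectralSubspace_pow_antitone (G : V →L[ℂ] W) :
    Antitone fun k : ℕ => spectralSubspace G ((1 / 4) ^ k) :=
  fun _ _ h => spectralSubspace_mono (pow_le_pow_of_le_one (by norm_num) (by norm_num) h)

theorem inner_eq_zero_of_mem_dyadicBlock (hjk : j ≠ k) (hx : x ∈ dyadicBlock G j)
    (hy : y ∈ dyadicBlock G k) : (inner ℂ x y : ℂ) = 0 ∧ (inner ℂ (G x) (G y) : ℂ) = 0 := by
  wlog hlt : j < k generalizing j k x y
  · obtain ⟨h, hG⟩ := this hjk.symm hy hx (hjk.lt_or_gt.resolve_left hlt)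
    exact ⟨inner_eq_zero_symm.1 h, inner_eq_zero_symm.1 hG⟩
  have hy' := spectralSubspace_pow_antitone G hlt hy.1
  exact ⟨inner_eq_zero_symm.1 (hx.2 y hy'),
    inner_eq_zero_symm.1 (inner_map_eq_zero_of_mem_spectralSubspace hy' hx.2)⟩

theorem dense_iSup_dyadicBlock (hG : Function.Injective G) (hle : ‖G‖ ≤ 1) :
    Dense ((⨆ k, dyadicBlock G k : Submodule ℂ V) : Set V) := by
  rw [Submodule.dense_iff_topologicalClosure_eq_top, Submodule.topologicalClosure_eq_top_iff,
    ← Submodule.iInf_orthogonal, Submodule.eq_bot_iff]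
  intro x hx
  rw [Submodule.mem_iInf] at hx
  have hmem (k : ℕ) : x ∈ spectralSubspace G ((1 / 4) ^ k) := by
    induction k with
    | zero =>
      rw [pow_zero, spectralSubspace_eq_top (pow_le_one₀ (norm_nonneg _) hle)]
      trivial
    | succ k ih =>
      obtain ⟨y, hy, z, hz, rfl⟩ :=
        (spectralSubspace G ((1 / 4) ^ (k + 1))).exists_add_mem_mem_orthogonal x
      have hzk : z ∈ spectralSubspace G ((1 / 4) ^ k) :=
        (Submodule.add_mem_iff_right _ (spectralSubspace_pow_antitone G k.le_succ hy)).1 ih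
      have hzz : (inner ℂ z (y + z) : ℂ) = 0 := hx k z ⟨hzk, hz⟩
      rw [inner_add_right, inner_eq_zero_symm.1 (hz y hy), zero_add, inner_self_eq_zero] at hzz
      rwa [hzz, add_zero]
  have hlim : Filter.Tendsto (fun k : ℕ => (1 / 2 : ℝ) ^ k * ‖x‖) Filter.atTop (𝓝 0) := by
    simpa using (tendsto_pow_atTop_nhds_zero_of_lt_one (by norm_num : (0 : ℝ) ≤ 1 / 2)
      (by norm_num)).mul_const ‖x‖
  refine (map_eq_zero_iff G hG).1 <| norm_le_zero_iff.1 <|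
    ge_of_tendsto' hlim fun k => norm_map_le_of_mem_spectralSubspace (hmem k)

end SpectralSubspace

section OrthogonalDecomposition

variable {ι V W W' : Type*} [NormedAddCommGroup V] [InnerProductSpace ℂ V]
  [NormedAddCommGroup W] [InnerProductSpace ℂ W] [NormedAddCommGroup W'] [InnerProductSpace ℂ W']
  {F : ι → Submodule ℂ V}

theorem norm_map_sum_sq {T : V →L[ℂ] W}
    (hT : Pairwise fun j k => (F j).map (T : V →ₗ[ℂ] W) ⟂ (F k).map (T : V →ₗ[ℂ] W))
    {f : ι → V} (hf : ∀ k, f k ∈ F k) (s : Finset ι) :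
    ‖T (∑ k ∈ s, f k)‖ ^ 2 = ∑ k ∈ s, ‖T (f k)‖ ^ 2 := by
  rw [map_sum]
  exact (OrthogonalFamily.of_pairwise hT).norm_sum
    (fun k => ⟨T (f k), Submodule.mem_map_of_mem (hf k)⟩) s

theorem norm_le_norm_of_le_on_blocks (hF : Dense ((⨆ k, F k : Submodule ℂ V) : Set V))
    {S : V →L[ℂ] W} {T : V →L[ℂ] W'}
    (hS : Pairwise fun j k => (F j).map (S : V →ₗ[ℂ] W) ⟂ (F k).map (S : V →ₗ[ℂ] W))
    (hT : Pairwise fun j k => (F j).map (T : V →ₗ[ℂ] W') ⟂ (F k).map (T : V →ₗ[ℂ] W'))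
    (hle : ∀ k, ∀ x ∈ F k, ‖S x‖ ≤ ‖T x‖) (x : V) : ‖S x‖ ≤ ‖T x‖ := by
  have hclosed : IsClosed {x | ‖S x‖ ≤ ‖T x‖} :=
    isClosed_le S.continuous.norm T.continuous.norm
  refine hclosed.closure_subset_iff.2 (fun x hx => ?_) (hF x)
  obtain ⟨f, hf, rfl⟩ := (Submodule.mem_iSup_iff_exists_finsupp _ _).1 hx
  refine le_of_sq_le_sq ?_ (norm_nonneg _)
  rw [Finsupp.sum, norm_map_sum_sq hS hf, norm_map_sum_sq hT hf]
  exact Finset.sum_le_sum fun k _ => pow_le_pow_left₀ (norm_nonneg _) (hle k _ (hf k)) 2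

theorem diagonal_apply_of_mem_block {Ω : Type*} {b : HilbertBasis Ω ℂ V} {κ : Ω → ι}
    (hF : Pairwise fun j k => F j ⟂ F k) (hb : ∀ i, b i ∈ F (κ i)) {D : V →L[ℂ] V} {c : ι → ℂ}
    (hD : ∀ i, D (b i) = c (κ i) • b i) {k : ι} {x : V} (hx : x ∈ F k) : D x = c k • x := by
  refine b.repr.injective ?_
  ext i
  rw [b.repr_apply_apply, b.repr_apply_apply, inner_smul_right,
    inner_apply_of_diagonal b (d := c ∘ κ) hD, Function.comp_apply]
  by_cases h : κ i = k
  · rw [h]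
  · rw [(hF h).inner_eq (hb i) hx, mul_zero, mul_zero]

theorem exists_hilbertBasis_of_blocks [CompleteSpace V] [∀ k, CompleteSpace (F k)]
    (hF : Pairwise fun j k => F j ⟂ F k) (hdense : Dense ((⨆ k, F k : Submodule ℂ V) : Set V)) :
    ∃ (w : ∀ k, Set (F k)) (b : HilbertBasis (Σ k, w k) ℂ V), ∀ a, b a ∈ F a.1 := by
  choose w c _ using fun k => exists_hilbertBasis ℂ (F k)
  let v : (Σ k, w k) → V := fun a => (F a.1).subtypeₗᵢ (c a.1 a.2)
  have hortho : Orthonormal ℂ v :=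
    (OrthogonalFamily.of_pairwise hF).orthonormal_sigma_orthonormal fun k => (c k).orthonormal
  have hspan : (Submodule.span ℂ (Set.range v))ᗮ = ⊥ := by
    refine (Submodule.eq_bot_iff _).2 fun x hx => ?_
    have hblock (k : ι) : innerSL ℂ x ∘L (F k).subtypeL = 0 := ext_on_hilbertBasis (c k) fun i =>
      inner_eq_zero_symm.1 (hx _ (Submodule.subset_span ⟨⟨k, i⟩, rfl⟩))
    have hx' : x ∈ (⨆ k, F k)ᗮ := by
      rw [← Submodule.iInf_orthogonal, Submodule.mem_iInf]
      exact fun k y hy => inner_eq_zero_symm.1 (DFunLike.congr_fun (hblock k) ⟨y, hy⟩)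
    rwa [(Submodule.topologicalClosure_eq_top_iff).1
      (Submodule.dense_iff_topologicalClosure_eq_top.1 hdense)] at hx'
  refine ⟨w, .mkOfOrthogonalEqBot hortho hspan, fun a => ?_⟩
  rw [HilbertBasis.coe_mkOfOrthogonalEqBot]
  exact (c a.1 a.2).2

end OrthogonalDecomposition

section DyadicFactorization

set_option maxSynthPendingDepth 3

variable {V W : Type*} [NormedAddCommGroup V] [InnerProductSpace ℂ V] [CompleteSpace V]
  [NormedAddCommGroup W] [InnerProductSpace ℂ W] [CompleteSpace W]

theorem exists_dyadic_diagonal (G : V →L[ℂ] W) (hG : Function.Injective G) (hle : ‖G‖ ≤ 1) :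
    ∃ D : V →L[ℂ] V, IsIdempotentGenerated (graphAlg D) ∧
      ∀ k, ∀ x ∈ dyadicBlock G k, D x = (((1 / 2 : ℝ) ^ k : ℝ) : ℂ) • x := by
  have hortho : Pairwise fun j k => dyadicBlock G j ⟂ dyadicBlock G k := fun j k hjk =>
    Submodule.isOrtho_iff_inner_eq.2 fun x hx y hy =>
      (inner_eq_zero_of_mem_dyadicBlock hjk hx hy).1
  obtain ⟨w, b, hb⟩ := exists_hilbertBasis_of_blocks hortho (dense_iSup_dyadicBlock hG hle)
  obtain ⟨D, hD, -⟩ := exists_diagonal b (d := fun a => (((1 / 2 : ℝ) ^ a.1 : ℝ) : ℂ)) zero_le_one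
    fun a => by
      rw [Complex.norm_real, Real.norm_of_nonneg (by positivity)]
      exact pow_le_one₀ (by norm_num) (by norm_num)
  exact ⟨D, isIdempotentGenerated_graphAlg_of_dyadic b Sigma.fst hD, fun k x hx =>
    diagonal_apply_of_mem_block (c := fun k => (((1 / 2 : ℝ) ^ k : ℝ) : ℂ)) hortho hb hD hx⟩

theorem norm_dyadic_comparable {G : V →L[ℂ] W} (hG : Function.Injective G) (hle : ‖G‖ ≤ 1)
    {D : V →L[ℂ] V}
    (hD : ∀ k, ∀ x ∈ dyadicBlock G k, D x = (((1 / 2 : ℝ) ^ k : ℝ) : ℂ) • x) (x : V) :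
    ‖G x‖ ≤ ‖D x‖ ∧ ‖D x‖ ≤ ‖(2 : ℂ) • G x‖ := by
  have hdense := dense_iSup_dyadicBlock hG hle
  have hnorm {k : ℕ} {x : V} (hx : x ∈ dyadicBlock G k) : ‖D x‖ = (1 / 2) ^ k * ‖x‖ := by
    rw [hD k x hx, norm_smul, Complex.norm_real, Real.norm_of_nonneg (by positivity)]
  have hGo (c : ℂ) : Pairwise fun j k => (dyadicBlock G j).map ((c • G : V →L[ℂ] W) : V →ₗ[ℂ] W) ⟂
      (dyadicBlock G k).map ((c • G : V →L[ℂ] W) : V →ₗ[ℂ] W) := by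
    refine fun j k hjk => Submodule.isOrtho_iff_inner_eq.2 ?_
    rintro _ ⟨x, hx, rfl⟩ _ ⟨y, hy, rfl⟩
    simp [inner_smul_left, inner_smul_right, (inner_eq_zero_of_mem_dyadicBlock hjk hx hy).2]
  have hDo : Pairwise fun j k => (dyadicBlock G j).map (D : V →ₗ[ℂ] V) ⟂
      (dyadicBlock G k).map (D : V →ₗ[ℂ] V) := by
    refine fun j k hjk => Submodule.isOrtho_iff_inner_eq.2 ?_
    rintro _ ⟨x, hx, rfl⟩ _ ⟨y, hy, rfl⟩
    simp [hD j x hx, hD k y hy, inner_smul_left, inner_smul_right,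
      (inner_eq_zero_of_mem_dyadicBlock hjk hx hy).1]
  constructor
  · refine norm_le_norm_of_le_on_blocks hdense (by simpa using! hGo 1) hDo (fun k x hx => ?_) x
    exact (norm_map_le_of_mem_spectralSubspace hx.1).trans_eq (hnorm hx).symm
  · refine norm_le_norm_of_le_on_blocks (T := (2 : ℂ) • G) hdense hDo (hGo 2) (fun k x hx => ?_) x
    have hlower := le_norm_map_of_mem_orthogonal_spectralSubspace hx.2
    rw [pow_succ] at hlower
    rw [hnorm hx, smul_apply, norm_smul, Complex.norm_ofNat]
    linarith

theorem exists_dyadic_factorization (G : V →L[ℂ] W) (hG : Function.Injective G) (hle : ‖G‖ ≤ 1) :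
    ∃ (D : V →L[ℂ] V) (G' : V →L[ℂ] W), IsIdempotentGenerated (graphAlg D) ∧
      (∀ x, G' (D x) = G x) ∧ (∀ z, ‖z‖ ≤ 2 * ‖G' z‖) ∧ ∀ z, G' z ∈ closure (Set.range G) := by
  obtain ⟨D, hgen, hD⟩ := exists_dyadic_diagonal G hG hle
  have hbound := norm_dyadic_comparable hG hle hD
  have hrange : DenseRange (D : V →ₗ[ℂ] V) := by
    refine (dense_iSup_dyadicBlock hG hle).mono ?_
    rw [← LinearMap.coe_range, SetLike.coe_subset_coe]
    refine iSup_le fun k x hx => ⟨((((1 / 2 : ℝ) ^ k : ℝ) : ℂ)⁻¹) • x, ?_⟩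
    rw [map_smul, ContinuousLinearMap.coe_coe, hD k x hx, inv_smul_smul₀]
    exact Complex.ofReal_ne_zero.2 (by positivity)
  have hG' := LinearMap.extendOfNorm_eq (f := (G : V →ₗ[ℂ] W)) hrange
    ⟨1, fun x => by simpa using (hbound x).1⟩
  set G' := (G : V →ₗ[ℂ] W).extendOfNorm (D : V →ₗ[ℂ] V)
  refine ⟨D, G', hgen, hG', isClosed_property hrange (isClosed_le (by fun_prop) (by fun_prop))
    fun x => ?_, isClosed_property hrange (isClosed_closure.preimage G'.continuous) fun x => ?_⟩
  · rw [hG']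
    simpa [norm_smul] using (hbound x).2
  · rw [hG']
    exact subset_closure ⟨x, rfl⟩

end DyadicFactorization

section TwoAtomAlgebra

variable {E E' : Type*} [NormedAddCommGroup E] [NormedSpace ℂ E] [NormedAddCommGroup E']
  [NormedSpace ℂ E'] {P N : Submodule ℂ E} {P' N' : Submodule ℂ E'}

theorem corner_mem_idempotentClosure {S : Subalgebra ℂ (E →L[ℂ] E)}
    {S' : Subalgebra ℂ (E' →L[ℂ] E')} (hS : IsIdempotentGenerated S) {i : E →L[ℂ] E'}
    {p : E' →L[ℂ] E} (hpi : ∀ v, p (i v) = v) (hextend : ∀ x ∈ S, i ∘L x ∘L p ∈ S')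
    {T : E' →L[ℂ] E'} (hrestrict : p ∘L T ∘L i ∈ S) :
    (i ∘L p) * T * (i ∘L p) ∈ idempotentClosure S' :=
  comp_comp_mem_idempotentClosure hpi hextend (hS _ hrestrict)

theorem IsIdempotentGenerated.twoAtomAlg_prod (h : IsIdempotentGenerated (twoAtomAlg P N))
    (h' : IsIdempotentGenerated (twoAtomAlg P' N')) :
    IsIdempotentGenerated (twoAtomAlg (P.prod P') (N.prod N')) := by
  intro T hT
  have hinl : ∀ x ∈ twoAtomAlg P N, .inl ℂ E E' ∘L x ∘L .fst ℂ E E' ∈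
      twoAtomAlg (P.prod P') (N.prod N') := fun x hx =>
    ⟨fun v hv => ⟨hx.1 _ hv.1, P'.zero_mem⟩, fun v hv => ⟨hx.2 _ hv.1, N'.zero_mem⟩⟩
  have hinr : ∀ x ∈ twoAtomAlg P' N', .inr ℂ E E' ∘L x ∘L .snd ℂ E E' ∈
      twoAtomAlg (P.prod P') (N.prod N') := fun x hx =>
    ⟨fun v hv => ⟨P.zero_mem, hx.1 _ hv.2⟩, fun v hv => ⟨N.zero_mem, hx.2 _ hv.2⟩⟩
  refine mem_idempotentClosure_of_corners (s := Finset.univ)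
    (f := ![.inl ℂ E E' ∘L .fst ℂ E E', .inr ℂ E E' ∘L .snd ℂ E E']) ?_ ?_ ?_ hT ?_
  · simp only [Fin.forall_fin_two, Finset.mem_univ, forall_const]
    exact ⟨rfl, rfl⟩
  · simp only [Fin.forall_fin_two, Finset.mem_univ, forall_const]
    exact ⟨hinl 1 (one_mem _), hinr 1 (one_mem _)⟩
  · simp only [Fin.sum_univ_two]
    ext v <;> simp
  · simp only [Fin.forall_fin_two, Finset.mem_univ, forall_const]
    exact ⟨corner_mem_idempotentClosure h (fun _ => rfl) hinl
        ⟨fun v hv => (hT.1 (v, 0) ⟨hv, P'.zero_mem⟩).1,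
          fun v hv => (hT.2 (v, 0) ⟨hv, N'.zero_mem⟩).1⟩,
      corner_mem_idempotentClosure h' (fun _ => rfl) hinr
        ⟨fun v hv => (hT.1 (0, v) ⟨P.zero_mem, hv⟩).2,
          fun v hv => (hT.2 (0, v) ⟨N.zero_mem, hv⟩).2⟩⟩

theorem IsIdempotentGenerated.twoAtomAlg_map (h : IsIdempotentGenerated (twoAtomAlg P N))
    (e : E ≃L[ℂ] E') :
    IsIdempotentGenerated
      (twoAtomAlg (P.map (e : E →ₗ[ℂ] E')) (N.map (e : E →ₗ[ℂ] E'))) := by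
  intro T hT
  have hpullback {Q : Submodule ℂ E}
      (hQ : ∀ y ∈ Q.map (e : E →ₗ[ℂ] E'), T y ∈ Q.map (e : E →ₗ[ℂ] E')) (x : E) (hx : x ∈ Q) :
      e.symm (T (e x)) ∈ Q := by
    obtain ⟨y, hy, hyx⟩ := hQ _ (Submodule.mem_map_of_mem hx)
    exact (e.symm_apply_eq.2 hyx.symm) ▸ hy
  have hT' : (e.symm : E' →L[ℂ] E) ∘L T ∘L (e : E →L[ℂ] E') ∈ twoAtomAlg P N :=
    ⟨hpullback hT.1, hpullback hT.2⟩
  have hconj := comp_comp_mem_idempotentClosure (S' := twoAtomAlg (P.map (e : E →ₗ[ℂ] E'))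
    (N.map (e : E →ₗ[ℂ] E'))) (i := (e : E →L[ℂ] E')) (p := (e.symm : E' →L[ℂ] E))
    e.symm_apply_apply (fun x hx => ?_) (h _ hT')
  · convert hconj
    ext v
    simp
  · refine ⟨?_, ?_⟩
    · rintro _ ⟨v, hv, rfl⟩
      exact ⟨x v, hx.1 v hv, by simp⟩
    · rintro _ ⟨v, hv, rfl⟩
      exact ⟨x v, hx.2 v hv, by simp⟩

end TwoAtomAlgebra

section CompleteTwoAtomAlgebra

variable {K : Type*} [NormedAddCommGroup K] [InnerProductSpace ℂ K] [CompleteSpace K]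

theorem isIdempotentGenerated_twoAtomAlg_top_bot :
    IsIdempotentGenerated (twoAtomAlg (⊤ : Submodule ℂ K) ⊥) := by
  have htop : twoAtomAlg (⊤ : Submodule ℂ K) ⊥ = ⊤ :=
    eq_top_iff.2 fun T _ => ⟨fun _ _ => trivial, by simp⟩
  rw [htop]
  exact isIdempotentGenerated_continuousLinearMap

theorem isIdempotentGenerated_twoAtomAlg_bot_top :
    IsIdempotentGenerated (twoAtomAlg (⊥ : Submodule ℂ K) ⊤) := by
  have htop : twoAtomAlg (⊥ : Submodule ℂ K) ⊤ = ⊤ :=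
    eq_top_iff.2 fun T _ => ⟨by simp, fun _ _ => trivial⟩
  rw [htop]
  exact isIdempotentGenerated_continuousLinearMap

end CompleteTwoAtomAlgebra

section TwoSubspaces

variable {H : Type*} [NormedAddCommGroup H] [InnerProductSpace ℂ H]

theorem norm_le_norm_add_of_inner_eq_zero {u v : H} (h : (inner ℂ u v : ℂ) = 0) :
    ‖u‖ ≤ ‖u + v‖ ∧ ‖v‖ ≤ ‖u + v‖ := by
  have hsq := norm_add_sq_eq_norm_sq_add_norm_sq_of_inner_eq_zero u v h
  constructor <;> refine le_of_sq_le_sq ?_ (norm_nonneg _) <;>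
    nlinarith [sq_nonneg ‖u‖, sq_nonneg ‖v‖]

/-- The component in `P` of the vectors of `N`; its singular values are the cosines of the
angles between `P` and `N`. -/
noncomputable def cosOperator (P N : Submodule ℂ H) [P.HasOrthogonalProjection] : N →L[ℂ] H :=
  P.starProjection ∘L N.subtypeL

/-- The component in `Pᗮ` of the vectors of `N`; its singular values are the sines of the
angles between `P` and `N`. -/
noncomputable def sinOperator (P N : Submodule ℂ H) [P.HasOrthogonalProjection] : N →L[ℂ] H :=
  Pᗮ.starProjection ∘L N.subtypeL

variable {P N : Submodule ℂ H}

section SineCosine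

variable [P.HasOrthogonalProjection]

theorem cosOperator_mem (x : N) : cosOperator P N x ∈ P := P.starProjection_apply_mem _

theorem sinOperator_mem (x : N) : sinOperator P N x ∈ Pᗮ := Pᗮ.starProjection_apply_mem _

theorem cosOperator_add_sinOperator (x : N) : cosOperator P N x + sinOperator P N x = x :=
  P.starProjection_add_starProjection_orthogonal _

theorem norm_sq_eq_cosOperator_add_sinOperator (x : N) :
    ‖x‖ ^ 2 = ‖cosOperator P N x‖ ^ 2 + ‖sinOperator P N x‖ ^ 2 :=
  P.norm_sq_eq_add_norm_sq_starProjection _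

theorem norm_sinOperator_le : ‖sinOperator P N‖ ≤ 1 :=
  ContinuousLinearMap.opNorm_le_bound _ zero_le_one fun x => by
    rw [one_mul]; exact Pᗮ.norm_starProjection_apply_le (x : H)

theorem sinOperator_injective (hPN : P ⊓ N = ⊥) : Function.Injective (sinOperator P N) := by
  refine (injective_iff_map_eq_zero _).2 fun x hx => ?_
  have hxP : (x : H) ∈ P := by
    rw [← cosOperator_add_sinOperator (P := P) x, hx, add_zero]
    exact cosOperator_mem x
  exact Subtype.ext ((Submodule.mem_bot ℂ).1 (hPN ▸ ⟨hxP, x.2⟩))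

theorem norm_sinOperator_le_norm_add {m : H} (hm : m ∈ P) (n : N) :
    ‖sinOperator P N n‖ ≤ ‖m + n‖ := by
  have horth : (inner ℂ (m + cosOperator P N n) (sinOperator P N n) : ℂ) = 0 :=
    sinOperator_mem n _ (add_mem hm (cosOperator_mem n))
  have hle := (norm_le_norm_add_of_inner_eq_zero horth).2
  rwa [add_assoc, cosOperator_add_sinOperator] at hle

theorem inner_eq_inner_sinOperator {y : H} (hy : y ∈ Pᗮ) (n : N) :
    (inner ℂ (n : H) y : ℂ) = inner ℂ (sinOperator P N n) y := by
  conv_lhs =>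
    rw [← cosOperator_add_sinOperator (P := P) n, inner_add_left, hy _ (cosOperator_mem n),
      zero_add]

end SineCosine

variable [CompleteSpace H] [CompleteSpace P] [CompleteSpace N]

/-- The part of `N` whose angle to `P` has sine at most `1 / 2`. -/
noncomputable def closePart (P N : Submodule ℂ H) [CompleteSpace P] [CompleteSpace N] :
    Submodule ℂ N :=
  spectralSubspace (sinOperator P N) (1 / 4)

instance : CompleteSpace (closePart P N) :=
  inferInstanceAs (CompleteSpace (spectralSubspace _ _))

/-- The component in `P` of the vectors of `closePart P N`. -/
noncomputable def closeCos (P N : Submodule ℂ H) [CompleteSpace P] [CompleteSpace N] :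
    closePart P N →L[ℂ] H :=
  cosOperator P N ∘L (closePart P N).subtypeL

/-- The component in `Pᗮ` of the vectors of `closePart P N`. -/
noncomputable def closeSin (P N : Submodule ℂ H) [CompleteSpace P] [CompleteSpace N] :
    closePart P N →L[ℂ] H :=
  sinOperator P N ∘L (closePart P N).subtypeL

theorem closeCos_mem (x : closePart P N) : closeCos P N x ∈ P := cosOperator_mem _

theorem closeSin_mem (x : closePart P N) : closeSin P N x ∈ Pᗮ := sinOperator_mem _

theorem closeCos_add_closeSin (x : closePart P N) :
    closeCos P N x + closeSin P N x = (x : N) :=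
  cosOperator_add_sinOperator _

theorem norm_closeSin_le : ‖closeSin P N‖ ≤ 1 :=
  ContinuousLinearMap.opNorm_le_bound _ zero_le_one fun x =>
    (sinOperator P N).le_of_opNorm_le norm_sinOperator_le (x : N)

theorem closeSin_injective (hPN : P ⊓ N = ⊥) : Function.Injective (closeSin P N) :=
  (sinOperator_injective hPN).comp Subtype.val_injective

theorem norm_le_two_mul_norm_closeCos (x : closePart P N) : ‖x‖ ≤ 2 * ‖closeCos P N x‖ := by
  have hpyth : ‖x‖ ^ 2 = ‖closeCos P N x‖ ^ 2 + ‖closeSin P N x‖ ^ 2 :=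
    norm_sq_eq_cosOperator_add_sinOperator (x : N)
  have hsin : ‖closeSin P N x‖ ^ 2 ≤ 1 / 4 * ‖x‖ ^ 2 := norm_sq_le_of_mem_spectralSubspace x.2
  refine le_of_sq_le_sq ?_ (by positivity)
  nlinarith [sq_nonneg ‖x‖]

theorem norm_le_two_mul_norm_sinOperator {n : N} (hn : n ∈ (closePart P N)ᗮ) :
    ‖n‖ ≤ 2 * ‖sinOperator P N n‖ := by
  have hsin : 1 / 4 * ‖n‖ ^ 2 ≤ ‖sinOperator P N n‖ ^ 2 :=
    le_norm_sq_of_mem_orthogonal_spectralSubspace hn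
  refine le_of_sq_le_sq ?_ (by positivity)
  linarith

theorem isClosed_range_closeCos :
    IsClosed (LinearMap.range (closeCos P N : closePart P N →ₗ[ℂ] H) : Set H) := by
  have hanti : AntilipschitzWith 2 (closeCos P N) :=
    (closeCos P N).antilipschitz_of_bound fun x => norm_le_two_mul_norm_closeCos x
  simpa using! hanti.isClosed_range (closeCos P N).uniformContinuous

theorem inner_closeSin_eq_zero {n : N} (hn : n ∈ (closePart P N)ᗮ) (x : closePart P N) :
    (inner ℂ (n : H) (closeSin P N x) : ℂ) = 0 := by
  rw [inner_eq_inner_sinOperator (closeSin_mem x), inner_eq_zero_symm]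
  exact inner_map_eq_zero_of_mem_spectralSubspace x.2 hn

theorem inner_closeCos_eq_zero {n : N} (hn : n ∈ (closePart P N)ᗮ) (x : closePart P N) :
    (inner ℂ (n : H) (closeCos P N x) : ℂ) = 0 := by
  have hsum : (inner ℂ (n : H) (closeCos P N x + closeSin P N x) : ℂ) = 0 := by
    rw [closeCos_add_closeSin]
    exact inner_eq_zero_symm.1 (hn x x.2)
  rwa [inner_add_right, inner_closeSin_eq_zero hn, add_zero] at hsum

/-- The part of `P` orthogonal to the projection of `closePart P N` onto `P`. -/
noncomputable def residualPart (P N : Submodule ℂ H) [CompleteSpace P] [CompleteSpace N] :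
    Submodule ℂ H :=
  P ⊓ (LinearMap.range (closeCos P N : closePart P N →ₗ[ℂ] H))ᗮ

instance : CompleteSpace (residualPart P N) :=
  ((completeSpace_coe_iff_isComplete.1 ‹CompleteSpace P›).isClosed.inter
    (Submodule.isClosed_orthogonal _)).completeSpace_coe

/-- The operator carrying a model space onto `H`: the first summand is mapped onto the parts of
`P` and `N` at a positive angle, the second to the sum of a vector of `P` close to `N` and a
vector of `Pᗮ`. -/
noncomputable def assembly (P N : Submodule ℂ H) [CompleteSpace P] [CompleteSpace N]
    (G' : closePart P N →L[ℂ] H) :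
    (residualPart P N × (closePart P N)ᗮ) × (closePart P N × closePart P N) →L[ℂ] H :=
  ((residualPart P N).subtypeL.coprod (N.subtypeL ∘L (closePart P N)ᗮ.subtypeL)).coprod
    ((closeCos P N).coprod G')

theorem assembly_apply (G' : closePart P N →L[ℂ] H) (m : residualPart P N)
    (n : (closePart P N)ᗮ) (x z : closePart P N) :
    assembly P N G' ((m, n), (x, z)) = ((m : H) + (n : N)) + (closeCos P N x + G' z) :=
  rfl

section Assembly

variable {G' : closePart P N →L[ℂ] H}

theorem norm_le_three_mul_norm_assembly (hG' : ∀ z, ‖z‖ ≤ 2 * ‖G' z‖)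
    (hcl : ∀ z, G' z ∈ closure (Set.range (closeSin P N)))
    (v : (residualPart P N × (closePart P N)ᗮ) × (closePart P N × closePart P N)) :
    ‖v‖ ≤ 3 * ‖assembly P N G' v‖ := by
  obtain ⟨⟨m, n⟩, x, z⟩ := v
  have hPorth : G' z ∈ Pᗮ :=
    closure_minimal (Set.range_subset_iff.2 closeSin_mem) P.isClosed_orthogonal (hcl z)
  have hnG' : (inner ℂ ((n : N) : H) (G' z) : ℂ) = 0 :=
    closure_minimal (Set.range_subset_iff.2 (inner_closeSin_eq_zero n.2))
      (isClosed_eq (f := fun y => (inner ℂ ((n : N) : H) y : ℂ)) (by fun_prop)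
        continuous_const) (hcl z)
  have hCos : (inner ℂ (closeCos P N x) (G' z) : ℂ) = 0 := hPorth _ (closeCos_mem x)
  have hSum : (inner ℂ ((m : H) + (n : N)) (closeCos P N x + G' z) : ℂ) = 0 := by
    have hmCos : (inner ℂ (m : H) (closeCos P N x) : ℂ) = 0 :=
      inner_eq_zero_symm.1 (m.2.2 _ ⟨x, rfl⟩)
    rw [inner_add_left, inner_add_right, inner_add_right, hmCos, hPorth _ m.2.1, hnG',
      inner_closeCos_eq_zero n.2]
    norm_num
  obtain ⟨hfar, hclose⟩ := norm_le_norm_add_of_inner_eq_zero hSum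
  obtain ⟨hx, hz⟩ := norm_le_norm_add_of_inner_eq_zero hCos
  have hn : ‖n‖ ≤ 2 * ‖(m : H) + (n : N)‖ :=
    (norm_le_two_mul_norm_sinOperator n.2).trans
      (mul_le_mul_of_nonneg_left (norm_sinOperator_le_norm_add m.2.1 _) zero_le_two)
  have hm : ‖m‖ ≤ ‖(m : H) + (n : N)‖ + ‖n‖ := norm_le_add_norm_add (m : H) ((n : N) : H)
  rw [assembly_apply]
  refine max_le (max_le ?_ ?_) (max_le ?_ ?_) <;>
    linarith [norm_le_two_mul_norm_closeCos x, hG' z,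
      norm_nonneg ((m : H) + (n : N) + (closeCos P N x + G' z))]

theorem map_assembly_eq_left :
    Submodule.map (assembly P N G').toLinearMap
      (((⊤ : Submodule ℂ _).prod ⊥).prod ((⊤ : Submodule ℂ _).prod ⊥)) = P := by
  apply le_antisymm
  · rintro _ ⟨⟨⟨m, n⟩, x, z⟩, ⟨⟨-, hn⟩, -, hz⟩, rfl⟩
    obtain rfl : n = 0 := hn
    obtain rfl : z = 0 := hz
    simpa [assembly_apply] using add_mem m.2.1 (closeCos_mem x)
  · intro y hy
    have : CompleteSpace (LinearMap.range (closeCos P N : closePart P N →ₗ[ℂ] H)) :=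
      isClosed_range_closeCos.completeSpace_coe
    obtain ⟨_, ⟨x, rfl⟩, s, hs, rfl⟩ := Submodule.exists_add_mem_mem_orthogonal
      (K := LinearMap.range (closeCos P N : closePart P N →ₗ[ℂ] H)) y
    have hsP : s ∈ P := (P.add_mem_iff_right (closeCos_mem x)).1 hy
    refine ⟨((⟨s, hsP, hs⟩, 0), (x, 0)), by simp, ?_⟩
    simp [assembly_apply, add_comm]

theorem map_assembly_eq_right {D : closePart P N →L[ℂ] closePart P N}
    (hD : ∀ x, G' (D x) = closeSin P N x) :
    Submodule.map (assembly P N G').toLinearMap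
      (((⊥ : Submodule ℂ _).prod ⊤).prod D.toLinearMap.graph) = N := by
  have happly (n : (closePart P N)ᗮ) (x : closePart P N) :
      assembly P N G' ((0, n), (x, D x)) = ((n + x : N) : H) := by
    rw [assembly_apply, hD, closeCos_add_closeSin]
    simp
  apply le_antisymm
  · rintro _ ⟨⟨⟨m, n⟩, x, z⟩, ⟨⟨hm, -⟩, hz⟩, rfl⟩
    obtain rfl : m = 0 := hm
    obtain rfl : z = D x := hz
    exact happly n x ▸ (n + x : N).2
  · intro y hy
    obtain ⟨x, hx, n, hn, hxn⟩ := Submodule.exists_add_mem_mem_orthogonal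
      (K := closePart P N) (⟨y, hy⟩ : N)
    refine ⟨((0, ⟨n, hn⟩), (⟨x, hx⟩, D ⟨x, hx⟩)), by simp, ?_⟩
    refine (happly _ _).trans ?_
    rw [add_comm, ← hxn]

theorem exists_continuousLinearEquiv_coe_eq_assembly
    (hspan : (P ⊔ N).topologicalClosure = ⊤) {D : closePart P N →L[ℂ] closePart P N}
    (hD : ∀ x, G' (D x) = closeSin P N x) (hG' : ∀ z, ‖z‖ ≤ 2 * ‖G' z‖)
    (hcl : ∀ z, G' z ∈ closure (Set.range (closeSin P N))) :
    ∃ e : ((residualPart P N × (closePart P N)ᗮ) × (closePart P N × closePart P N)) ≃L[ℂ] H,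
      e.toContinuousLinearMap = assembly P N G' := by
  have hanti : AntilipschitzWith 3 (assembly P N G') :=
    (assembly P N G').antilipschitz_of_bound (norm_le_three_mul_norm_assembly hG' hcl)
  have hclosed : IsClosed ((assembly P N G').toLinearMap.range : Set H) := by
    simpa using! hanti.isClosed_range (assembly P N G').uniformContinuous
  have hrange : (assembly P N G').toLinearMap.range = ⊤ := by
    rw [eq_top_iff, ← hspan]
    refine Submodule.topologicalClosure_minimal _ (sup_le ?_ ?_) hclosed
    · exact (map_assembly_eq_left (G' := G')).ge.trans LinearMap.map_le_range
    · exact (map_assembly_eq_right hD).ge.trans LinearMap.map_le_range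
  exact ⟨.ofBijective (assembly P N G') (LinearMap.ker_eq_bot.2 hanti.injective) hrange,
    ContinuousLinearEquiv.coe_ofBijective _ _ _⟩

end Assembly

set_option maxSynthPendingDepth 3 in
theorem isIdempotentGenerated_twoAtomAlg (hPN : P ⊓ N = ⊥)
    (hspan : (P ⊔ N).topologicalClosure = ⊤) : IsIdempotentGenerated (twoAtomAlg P N) := by
  obtain ⟨D, G', hgraph, hD, hG', hcl⟩ :=
    exists_dyadic_factorization (closeSin P N) (closeSin_injective hPN) norm_closeSin_le
  obtain ⟨e, he⟩ := exists_continuousLinearEquiv_coe_eq_assembly hspan hD hG' hcl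
  have hmodel := ((isIdempotentGenerated_twoAtomAlg_top_bot.twoAtomAlg_prod
    isIdempotentGenerated_twoAtomAlg_bot_top).twoAtomAlg_prod hgraph).twoAtomAlg_map e
  have hcoe : e.toLinearEquiv.toLinearMap = (assembly P N G').toLinearMap :=
    congrArg ContinuousLinearMap.toLinearMap he
  rwa [hcoe, map_assembly_eq_left, map_assembly_eq_right hD] at hmodel

end TwoSubspaces

theorem two_atom_lattice_local_cocycles_are_cocycles_general {H : Type*} [NormedAddCommGroup H]
    [InnerProductSpace ℂ H] [CompleteSpace H]
    {M N : Submodule ℂ H} (hMc : IsClosed (M : Set H)) (hNc : IsClosed (N : Set H))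
    (hMN : M ⊓ N = ⊥) (hspan : (M ⊔ N).topologicalClosure = ⊤)
    {S : Subalgebra ℂ (H →L[ℂ] H)}
    (hS : ∀ T : H →L[ℂ] H, T ∈ S ↔ (∀ x ∈ M, T x ∈ M) ∧ (∀ x ∈ N, T x ∈ N))
    {n : ℕ} {X : Type*} [NormedAddCommGroup X] [NormedSpace ℂ X] {B : BanachBimodule ↥S X}
    {T : MultilinearMap ℂ (fun _ : Fin n => ↥S) X} (hT : IsBoundedLocalCocycle B T) :
    IsBoundedCocycle B T := by
  have : CompleteSpace M := hMc.completeSpace_coe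
  have : CompleteSpace N := hNc.completeSpace_coe
  obtain rfl : S = twoAtomAlg M N := SetLike.ext hS
  exact hT.isBoundedCocycle (isIdempotentGenerated_twoAtomAlg hMN hspan).top_coe

set_option synthInstance.maxHeartbeats 1000000 in
/-- Let `H` be a complex separable Hilbert space and `ℒ = {0, M, N, H}` a subspace
lattice with two atoms on `H`, with `Alg ℒ` realized as the subalgebra `S ≤ B(H)`.
Then for every Banach `Alg ℒ`-bimodule `X` and every `n ∈ ℕ`, every bounded local
`n`-cocycle `T : (Alg ℒ)ⁿ → X` is an `n`-cocycle. -/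
theorem two_atom_lattice_local_cocycles_are_cocycles (H : Type*) [NormedAddCommGroup H]
    [InnerProductSpace ℂ H] [CompleteSpace H] [TopologicalSpace.SeparableSpace H]
    (M N : Submodule ℂ H) (hMc : IsClosed (M : Set H)) (hNc : IsClosed (N : Set H))
    (hMN : M ⊓ N = ⊥) (hspan : (M ⊔ N).topologicalClosure = ⊤)
    (S : Subalgebra ℂ (H →L[ℂ] H))
    (hS : ∀ T : H →L[ℂ] H, T ∈ S ↔ (∀ x ∈ M, T x ∈ M) ∧ (∀ x ∈ N, T x ∈ N))
    (n : ℕ) (hn : 0 < n)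
    (X : Type) (_ : NormedAddCommGroup X) (_ : NormedSpace ℂ X) (_ : CompleteSpace X)
    (B : BanachBimodule ↥S X)
    (T : MultilinearMap ℂ (fun _ : Fin n => ↥S) X)
    (hT : IsBoundedLocalCocycle B T) :
    IsBoundedCocycle B T :=
  two_atom_lattice_local_cocycles_are_cocycles_general hMc hNc hMN hspan hS hT
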